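/- arXiv:2403.14875 — 2 statements merged into one kernel-verified Lean document; each statement's English description precedes it below -/
import Mathlib

section
/- Let n ≥ 6. The upper-left-corner problem for matrix groups over ℚ is undecidable: there is no computable function which, given as input a finite list X of invertible n×n matrices with rational entries, decides whether the subgroup ⟨X⟩ of GL_n(ℚ) generated by X contains a matrix whose (1,1)-entry equals 0. -/
/-- Rational matrices are primcodable (natural effective encoding of matrices). -/
noncomputable instance matQPrimcodable (n : ℕ) :
    Primcodable (Matrix (Fin n) (Fin n) ℚ) :=
  Primcodable.finArrow

/-!
The halting problem of a multi-stack machine is carried into the matrix groups in four steps.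

* *Affine moves.* A configuration becomes a vector of integers: the state is a residue class modulo
  the number of states plus one, a stack is a number written in a fixed base. A transition is then
  an affine move `m * u + a ↦ p * u + q`. Further moves empty the stacks of a halted configuration,
  and determinism shows that a configuration is equivalent to `0` under the moves iff the machine
  halts.
* *A finitely presented group.* Put `T_a = x ^ a * t * x ^ (-a)` for commuting `x j`, and let `r`
  conjugate `x j ^ m j` to `x j ^ p j` and `T_a` to `T_q`: it then conjugates `T_(m * u + a)` to
  `T_(p * u + q)`. If `k` commutes with `t` and all the `r`, it commutes with `T_z` for all `z`
  equivalent to `0`, and for no other `z`, as a group of permutations shows. If a machine is started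
  at `c • e_j + v`, then `y * T_v * y⁻¹` with `y = x j ^ c` is the conjugate of interest; its
  commutator with `k` is made a generator, so that `c` occurs only in the relator `y = x j ^ c`.
* *Mikhailova's subgroup.* The pairs `(a, b)` of words of a free group `F` that are equal in the
  presented group form a finitely generated subgroup of `F × F`.
* *The corner.* Ping-pong gives `ρ : F → SL(2, ℤ)` in which only the identity preserves the line of
  `e₁`. In a suitable basis the corner of `ρ a ⊗ ρ b` is the determinant of `ρ a • e₁` and
  `ρ b • (e₁ + e₂)`. For the generator `z` introduced as a commutator, `ρ z • e₁ = e₁ + e₂`, so the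
  corner vanishes iff `a⁻¹ * b * z = 1`, which happens in Mikhailova's subgroup iff `z` is trivial
  in the presented group.

The only generating matrix that depends on the input is affine in `c`, hence computable.
-/

namespace CornerProblem

section Computability

theorem coprime_iff_forall_lt (a b : ℕ) :
    Nat.Coprime a b ↔ ∀ d < a + b + 1, ¬ a % d = 0 ∨ ¬ b % d = 0 ∨ d = 1 := by
  refine ⟨fun hab d _ => ?_, fun h => ?_⟩
  · by_contra! hd
    exact hd.2.2 (Nat.eq_one_of_dvd_coprimes hab (Nat.dvd_of_mod_eq_zero hd.1)
      (Nat.dvd_of_mod_eq_zero hd.2.1))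
  · have hle : Nat.gcd a b ≤ a + b := by
      rcases a.eq_zero_or_pos with rfl | ha
      · simp
      · exact (Nat.gcd_le_left b ha).trans (Nat.le_add_right a b)
    simpa [Nat.mod_eq_zero_of_dvd (Nat.gcd_dvd_left a b),
      Nat.mod_eq_zero_of_dvd (Nat.gcd_dvd_right a b)] using h _ (Nat.lt_succ_of_le hle)

theorem primrecRel_coprime : PrimrecRel Nat.Coprime := by
  have hdiv : PrimrecRel fun (d : ℕ) (x : ℕ × ℕ) => ¬ x.1 % d = 0 ∨ ¬ x.2 % d = 0 ∨ d = 1 :=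
    (Primrec.eq.comp (Primrec.nat_mod.comp (Primrec.fst.comp .snd) .fst) (.const 0)).not.or
      ((Primrec.eq.comp (Primrec.nat_mod.comp (Primrec.snd.comp .snd) .fst) (.const 0)).not.or
        (Primrec.eq.comp .fst (.const 1)))
  have hbound : Primrec fun x : ℕ × ℕ => List.range (x.1 + x.2 + 1) :=
    Primrec.list_range.comp (Primrec.succ.comp Primrec.nat_add)
  exact (hdiv.forall_mem_list.comp hbound .id).of_eq fun x => by
    simp only [List.mem_range, coprime_iff_forall_lt, id]

theorem intEquivNat_add_one_div_two (z : ℤ) : (Equiv.intEquivNat z + 1) / 2 = z.natAbs := by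
  rcases z with k | k
  · change (2 * k + 1) / 2 = k
    lia
  · change (2 * k + 1 + 1) / 2 = k + 1
    lia

theorem mem_range_encode_rat (m : ℕ) :
    m ∈ Set.range (@Encodable.encode ℚ Rat.instEncodable) ↔
      0 < m.unpair.2 ∧ Nat.Coprime ((m.unpair.1 + 1) / 2) m.unpair.2 := by
  have encode_eq (q : ℚ) :
      @Encodable.encode ℚ Rat.instEncodable q = Nat.pair (Equiv.intEquivNat q.num) q.den := rfl
  refine ⟨?_, fun ⟨hpos, hcop⟩ => ?_⟩
  · rintro ⟨q, rfl⟩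
    rw [encode_eq, Nat.unpair_pair, intEquivNat_add_one_div_two]
    exact ⟨q.den_pos, q.reduced⟩
  · obtain ⟨z, hz⟩ := Equiv.intEquivNat.surjective m.unpair.1
    rw [← hz, intEquivNat_add_one_div_two] at hcop
    exact ⟨⟨z, m.unpair.2, hpos.ne', hcop⟩, by rw [encode_eq, hz, Nat.pair_unpair]⟩

/- The `Primcodable ℚ` instance comes from `Rat.instDenumerable`: the code of `q` is the number of
elements of the range of `Rat.instEncodable` below the code of `q` there. -/
theorem primrec_intCast_rat : Primrec (fun z : ℤ => (z : ℚ)) := by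
  have hrange : PrimrecPred fun m : ℕ => m ∈ Set.range (@Encodable.encode ℚ Rat.instEncodable) :=
    ((Primrec.nat_lt.comp (.const 0) (Primrec.snd.comp .unpair)).and
      (primrecRel_coprime.comp
        (Primrec.nat_div.comp (Primrec.succ.comp (Primrec.fst.comp .unpair)) (.const 2))
        (Primrec.snd.comp .unpair))).of_eq fun m => (mem_range_encode_rat m).symm
  let := @Encodable.decidableRangeEncode ℚ Rat.instEncodable
  have hcount := Primrec.list_length.comp ((Primrec.listFilter hrange).comp
    (Primrec.list_range.comp (Primrec₂.natPair.comp (Primrec.encode (α := ℤ)) (.const 1))))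
  rw [← Primrec.encode_iff]
  refine hcount.of_eq fun z => ?_
  rw [← List.countP_eq_length_filter]
  rfl

theorem primrec₂_intCast_sub : Primrec₂ fun a b : ℕ => (a : ℤ) - b := by
  rw [← Primrec₂.encode_iff]
  have hcases := Primrec.ite (Primrec.nat_le.comp Primrec.snd Primrec.fst)
    (Primrec.nat_double.comp (Primrec.nat_sub.comp (Primrec.fst (α := ℕ) (β := ℕ)) Primrec.snd))
    (Primrec.nat_double_succ.comp (Primrec.pred.comp
      (Primrec.nat_sub.comp (Primrec.snd (α := ℕ) (β := ℕ)) Primrec.fst)))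
  refine hcases.of_eq ?_
  rintro ⟨a, b⟩
  by_cases hab : b ≤ a
  · obtain ⟨c, rfl⟩ := Nat.exists_eq_add_of_le hab
    have hsub : ((b + c : ℕ) : ℤ) - (b : ℤ) = Int.ofNat c := by simp
    simp only [if_pos hab, hsub, Nat.add_sub_cancel_left]
    rfl
  · obtain ⟨c, rfl⟩ := Nat.exists_eq_add_of_lt (not_le.1 hab)
    have hsub : (a : ℤ) - ((a + c + 1 : ℕ) : ℤ) = Int.negSucc c := by
      rw [Int.negSucc_eq]; push_cast; ring
    have hpred : a + c + 1 - a = c + 1 := by lia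
    simp only [if_neg hab, hsub, hpred, Nat.pred_succ]
    rfl

theorem primrec_affine_int (α β : ℤ) : Primrec fun k : ℕ => α + k * β := by
  have hlin (a b : ℕ) : Primrec fun k : ℕ => a + k * b :=
    Primrec.nat_add.comp (.const a) (Primrec.nat_mul.comp .id (.const b))
  refine (primrec₂_intCast_sub.comp (hlin α.toNat β.toNat)
    (hlin (-α).toNat (-β).toNat)).of_eq fun k => ?_
  push_cast
  linear_combination Int.toNat_sub_toNat_neg α + k * Int.toNat_sub_toNat_neg β

theorem computable_affine_matrix {n : ℕ} (A B : Matrix (Fin n) (Fin n) ℤ) {g : ℕ → ℕ}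
    (hg : Computable g) :
    Computable fun k => (A + (g k : ℤ) • B).map (Int.cast : ℤ → ℚ) := by
  have hrow (i : Fin n) : Primrec fun (k : ℕ) (j : Fin n) => ((A i j + k * B i j : ℤ) : ℚ) :=
    Primrec.fin_curry.2 (Primrec.fin_curry₁.2 fun j =>
      primrec_intCast_rat.comp (primrec_affine_int (A i j) (B i j))).swap
  have hmat : Primrec fun k : ℕ => (A + (k : ℤ) • B).map (Int.cast : ℤ → ℚ) :=
    Primrec.fin_curry.2 (Primrec.fin_curry₁.2 hrow).swap
  exact hmat.to_comp.comp hg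

end Computability

section PingPong

open scoped MatrixGroups
open Matrix

/-- The `k`-th power of the parabolic element of `SL(2, ℤ)` with trace `2` fixing `(C, 1)`. -/
def parabolic (C k : ℤ) : SL(2, ℤ) :=
  ⟨!![1 + k * C, -k * C ^ 2; k, 1 - k * C], by rw [det_fin_two_of]; ring⟩

theorem coe_parabolic (C k : ℤ) :
    (parabolic C k : Matrix (Fin 2) (Fin 2) ℤ) = 1 + k • !![C, -C ^ 2; 1, -C] := by
  ext i j
  fin_cases i <;> fin_cases j <;> simp [parabolic, sub_eq_add_neg]

theorem parabolic_mul (C k l : ℤ) : parabolic C k * parabolic C l = parabolic C (k + l) := by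
  have hnil : (!![C, -C ^ 2; 1, -C] * !![C, -C ^ 2; 1, -C] : Matrix (Fin 2) (Fin 2) ℤ) = 0 := by
    ext i j
    fin_cases i <;> fin_cases j <;> simp <;> ring
  apply Subtype.ext
  change (parabolic C k : Matrix (Fin 2) (Fin 2) ℤ) * parabolic C l = parabolic C (k + l)
  simp only [coe_parabolic, mul_add, add_mul, smul_mul_smul_comm, hnil, mul_one, one_mul,
    smul_zero, add_smul, add_zero, add_assoc]

theorem parabolic_zero (C : ℤ) : parabolic C 0 = 1 :=
  Subtype.ext ((coe_parabolic C 0).trans (by rw [zero_smul, add_zero]; rfl))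

theorem inv_parabolic (C k : ℤ) : (parabolic C k)⁻¹ = parabolic C (-k) :=
  inv_eq_of_mul_eq_one_right (by rw [parabolic_mul, add_neg_cancel, parabolic_zero])

theorem parabolic_pow (C : ℤ) (k : ℕ) : parabolic C 1 ^ k = parabolic C k := by
  induction k with
  | zero => rw [pow_zero, Nat.cast_zero, parabolic_zero]
  | succ k ih => rw [pow_succ, ih, parabolic_mul, Nat.cast_succ]

/-- The linear form with kernel spanned by `(C, 1)`; it is invariant under `parabolic C`. -/
def parabolicForm (C : ℤ) (v : Fin 2 → ℤ) : ℤ := v 0 - C * v 1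

theorem parabolic_smul (C k : ℤ) (v : Fin 2 → ℤ) :
    parabolic C k • v = v + (k * parabolicForm C v) • ![C, 1] := by
  rw [Matrix.SpecialLinearGroup.smul_def, coe_parabolic, add_smul, one_smul, smul_assoc, mul_smul,
    smul_eq_mulVec]
  congr 2
  ext i
  fin_cases i <;> simp [parabolicForm, vecHead, vecTail] <;> ring

theorem parabolic_smul_one (C k : ℤ) (v : Fin 2 → ℤ) :
    (parabolic C k • v) 1 = v 1 + k * parabolicForm C v := by
  simp [parabolic_smul]

theorem parabolicForm_parabolic_smul (C k : ℤ) (v : Fin 2 → ℤ) :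
    parabolicForm C (parabolic C k • v) = parabolicForm C v := by
  simp [parabolic_smul, parabolicForm]
  ring

/-- The cone around the line spanned by `(C, 1)` which attracts `parabolic C ε`. The strict
inequality forces `parabolicForm C v ≠ 0`, so the line itself is excluded. -/
def InCone (C ε : ℤ) (v : Fin 2 → ℤ) : Prop :=
  parabolicForm C v ^ 2 < 3 * (ε * v 1 * parabolicForm C v)

variable {C ε : ℤ} {v : Fin 2 → ℤ}

theorem inCone_parabolic_iff (hε : |ε| = 1) :
    InCone C ε (parabolic C ε • v) ↔
      0 < 3 * (ε * v 1 * parabolicForm C v) + 2 * parabolicForm C v ^ 2 := by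
  have hsq : ε ^ 2 = 1 := by rw [← sq_abs, hε, one_pow]
  have hexpand : 3 * (ε * (v 1 + ε * parabolicForm C v) * parabolicForm C v) =
      3 * (ε * v 1 * parabolicForm C v) + 3 * parabolicForm C v ^ 2 := by
    linear_combination 3 * parabolicForm C v ^ 2 * hsq
  rw [InCone, parabolicForm_parabolic_smul, parabolic_smul_one, hexpand]
  constructor <;> intro h <;> linarith

theorem abs_sign_mul_mul (hε : |ε| = 1) (x y : ℤ) : |ε * x * y| = |x| * |y| := by
  rw [abs_mul, abs_mul, hε, one_mul]

theorem InCone.abs_parabolicForm_lt (hε : |ε| = 1) (h : InCone C ε v) :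
    |parabolicForm C v| < 3 * |v 1| := by
  have hle := le_abs_self (ε * v 1 * parabolicForm C v)
  rw [abs_sign_mul_mul hε] at hle
  rw [InCone, ← sq_abs] at h
  exact lt_of_mul_lt_mul_right (a := |parabolicForm C v|) (by linarith) (abs_nonneg _)

theorem InCone.parabolic (hε : |ε| = 1) (h : InCone C ε v) :
    InCone C ε (parabolic C ε • v) := by
  rw [inCone_parabolic_iff hε]
  rw [InCone] at h
  linarith [sq_nonneg (parabolicForm C v)]

theorem inCone_parabolic_of_le (hε : |ε| = 1) (hne : parabolicForm C v ≠ 0)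
    (hle : 3 * |v 1| ≤ |parabolicForm C v|) : InCone C ε (parabolic C ε • v) := by
  rw [inCone_parabolic_iff hε]
  have hneg := neg_abs_le (ε * v 1 * parabolicForm C v)
  rw [abs_sign_mul_mul hε] at hneg
  have hmul := mul_le_mul_of_nonneg_right hle (abs_nonneg (parabolicForm C v))
  rw [← sq, sq_abs] at hmul
  linarith [sq_pos_of_ne_zero hne]

theorem InCone.parabolic_of_six_le {C' ε' : ℤ} (hC : 6 ≤ |C - C'|) (hε : |ε| = 1)
    (hε' : |ε'| = 1) (h : InCone C ε v) : InCone C' ε' (CornerProblem.parabolic C' ε' • v) := by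
  have hlt := h.abs_parabolicForm_lt hε
  have hdiff : |C - C'| * |v 1| ≤ |parabolicForm C' v| + |parabolicForm C v| := by
    rw [← abs_mul, show (C - C') * v 1 = parabolicForm C' v - parabolicForm C v by
      simp only [parabolicForm]; ring]
    exact abs_sub _ _
  have hgap := mul_le_mul_of_nonneg_right hC (abs_nonneg (v 1))
  have hlarge : 3 * |v 1| < |parabolicForm C' v| := by linarith
  exact inCone_parabolic_of_le hε'
    (abs_pos.1 ((mul_nonneg zero_le_three (abs_nonneg (v 1))).trans_lt hlarge)) hlarge.le

variable {γ : Type*}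

/-- The representation of a free group sending the letter `i` to `parabolic (C i) 1`. -/
def freeRep (C : γ → ℤ) : FreeGroup γ →* SL(2, ℤ) :=
  FreeGroup.lift fun i => parabolic (C i) 1

theorem freeRep_of (C : γ → ℤ) (i : γ) : freeRep C (.of i) = parabolic (C i) 1 :=
  FreeGroup.lift_apply_of

/-- The exponent of a letter in `FreeGroup.mk`. -/
def letterSign (b : Bool) : ℤ := cond b 1 (-1)

theorem abs_letterSign (b : Bool) : |letterSign b| = 1 := by cases b <;> rfl

theorem freeRep_mk_cons (C : γ → ℤ) (i : γ) (b : Bool) (L : List (γ × Bool)) :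
    freeRep C (FreeGroup.mk ((i, b) :: L)) =
      parabolic (C i) (letterSign b) * freeRep C (FreeGroup.mk L) := by
  have hletter : freeRep C (FreeGroup.mk [(i, b)]) = parabolic (C i) (letterSign b) := by
    cases b <;> simp [freeRep, FreeGroup.lift_mk, letterSign, inv_parabolic]
  rw [← hletter, ← map_mul, FreeGroup.mul_mk, List.singleton_append]

theorem inCone_freeRep {C : γ → ℤ} (hC : Pairwise fun i j => 6 ≤ |C i - C j|)
    (L : List (γ × Bool)) (i : γ) (b : Bool) (hred : FreeGroup.IsReduced ((i, b) :: L)) :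
    InCone (C i) (letterSign b) (freeRep C (FreeGroup.mk ((i, b) :: L)) • Pi.single 0 1) := by
  induction L generalizing i b with
  | nil =>
    rw [freeRep_mk_cons, ← FreeGroup.one_eq_mk, map_one, mul_one]
    exact inCone_parabolic_of_le (abs_letterSign b) (by simp [parabolicForm]) (by simp)
  | cons a L ih =>
    obtain ⟨j, c⟩ := a
    have hprev := ih j c (List.IsChain.of_cons hred)
    rw [freeRep_mk_cons, mul_smul]
    by_cases hij : i = j
    · obtain rfl : b = c := (List.isChain_cons_cons.1 hred).1 hij
      subst hij
      exact hprev.parabolic (abs_letterSign b)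
    · exact hprev.parabolic_of_six_le (hC (Ne.symm hij)) (abs_letterSign c) (abs_letterSign b)

theorem freeRep_one_zero_eq_zero_iff {C : γ → ℤ} (hC : Pairwise fun i j => 6 ≤ |C i - C j|)
    (w : FreeGroup γ) : freeRep C w 1 0 = 0 ↔ w = 1 := by
  classical
  refine ⟨fun h => ?_, by rintro rfl; simp⟩
  by_contra hw
  obtain ⟨⟨i, b⟩, L, hL⟩ := List.exists_cons_of_ne_nil (mt FreeGroup.toWord_eq_nil_iff.1 hw)
  have hcone := inCone_freeRep hC L i b (hL ▸ FreeGroup.isReduced_toWord)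
  rw [← hL, FreeGroup.mk_toWord] at hcone
  have hlt := hcone.abs_parabolicForm_lt (abs_letterSign b)
  rw [Matrix.SpecialLinearGroup.smul_def, smul_eq_mulVec, mulVec_single_one, col_apply, h, abs_zero,
    mul_zero] at hlt
  exact hlt.not_ge (abs_nonneg _)

theorem exists_six_le_abs_sub [Countable γ] (z : γ) :
    ∃ C : γ → ℤ, C z = 0 ∧ Pairwise fun i j => 6 ≤ |C i - C j| := by
  obtain ⟨f, hf⟩ := exists_injective_nat γ
  refine ⟨fun i => 6 * ((f i : ℤ) - f z), by simp, fun i j hij => ?_⟩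
  have hne : (f i : ℤ) - f j ≠ 0 := sub_ne_zero.2 (Nat.cast_injective.ne (hf.ne hij))
  calc (6 : ℤ) ≤ 6 * |(f i : ℤ) - f j| := by linarith [Int.one_le_abs hne]
    _ = |6 * ((f i : ℤ) - f z) - 6 * (f j - f z)| := by
      rw [← mul_sub, sub_sub_sub_cancel_right, abs_mul, abs_of_pos (by norm_num : (0 : ℤ) < 6)]

end PingPong

section Corner

open scoped Kronecker MatrixGroups

/-- A change of basis of `ℤ² ⊗ ℤ²` whose first row is the determinant form; the first column of its
inverse is `e₁ ⊗ (e₁ + e₂)`. -/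
def cornerBasis : Matrix (Fin 2 × Fin 2) (Fin 2 × Fin 2) ℤ :=
  (!![0, 1, -1, 0; 1, -1, 1, 0; 0, 0, 1, 0; 0, 0, 0, 1] : Matrix (Fin 4) (Fin 4) ℤ).submatrix
    finProdFinEquiv finProdFinEquiv

/-- The inverse of `cornerBasis`. -/
def cornerBasisInv : Matrix (Fin 2 × Fin 2) (Fin 2 × Fin 2) ℤ :=
  (!![1, 1, 0, 0; 1, 0, 1, 0; 0, 0, 1, 0; 0, 0, 0, 1] : Matrix (Fin 4) (Fin 4) ℤ).submatrix
    finProdFinEquiv finProdFinEquiv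

theorem cornerBasis_mul_cornerBasisInv : cornerBasis * cornerBasisInv = 1 := by
  decide

theorem cornerBasisInv_mul_cornerBasis : cornerBasisInv * cornerBasis = 1 := by
  decide

/-- The Kronecker product `a ⊗ b` written in the corner basis. -/
def cornerBlock (a b : Matrix (Fin 2) (Fin 2) ℤ) : Matrix (Fin 2 × Fin 2) (Fin 2 × Fin 2) ℤ :=
  cornerBasis * (a ⊗ₖ b) * cornerBasisInv

theorem cornerBlock_one : cornerBlock 1 1 = 1 := by
  rw [cornerBlock, Matrix.one_kronecker_one, mul_one, cornerBasis_mul_cornerBasisInv]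

theorem cornerBlock_mul (a b a' b' : Matrix (Fin 2) (Fin 2) ℤ) :
    cornerBlock (a * a') (b * b') = cornerBlock a b * cornerBlock a' b' :=
  calc cornerBasis * ((a * a') ⊗ₖ (b * b')) * cornerBasisInv
    _ = cornerBasis * (a ⊗ₖ b) * (cornerBasisInv * cornerBasis) * (a' ⊗ₖ b') * cornerBasisInv := by
      rw [Matrix.mul_kronecker_mul, cornerBasisInv_mul_cornerBasis, mul_one]
      simp only [mul_assoc]
    _ = cornerBlock a b * cornerBlock a' b' := by simp only [cornerBlock, mul_assoc]

theorem cornerBlock_add_smul (a b c : Matrix (Fin 2) (Fin 2) ℤ) (k : ℤ) :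
    cornerBlock a (b + k • c) = cornerBlock a b + k • cornerBlock a c := by
  simp only [cornerBlock, Matrix.kronecker_add, Matrix.kronecker_smul, mul_add, add_mul,
    Matrix.mul_smul, Matrix.smul_mul]

theorem cornerBlock_corner (a b : Matrix (Fin 2) (Fin 2) ℤ) :
    cornerBlock a b (0, 0) (0, 0) = a 0 0 * (b 1 0 + b 1 1) - a 1 0 * (b 0 0 + b 0 1) := by
  simp [cornerBlock, cornerBasis, cornerBasisInv, Matrix.mul_apply, Fintype.sum_prod_type,
    finProdFinEquiv]
  ring

variable {m ν : Type*} [DecidableEq ν] (e : (Fin 2 × Fin 2) ⊕ ν ≃ m)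

/-- The matrix of `(a ⊗ b) ⊕ 1`, with `a ⊗ b` in the corner basis. -/
def cornerMatrix (a b : Matrix (Fin 2) (Fin 2) ℤ) : Matrix m m ℤ :=
  Matrix.reindex e e (Matrix.fromBlocks (cornerBlock a b) 0 0 1)

theorem cornerMatrix_one [DecidableEq m] : cornerMatrix e 1 1 = 1 := by
  simp [cornerMatrix, cornerBlock_one]

theorem cornerMatrix_mul [Fintype m] [Finite ν] (a b a' b' : Matrix (Fin 2) (Fin 2) ℤ) :
    cornerMatrix e (a * a') (b * b') = cornerMatrix e a b * cornerMatrix e a' b' := by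
  have := Fintype.ofFinite ν
  simp [cornerMatrix, Matrix.submatrix_mul_equiv, Matrix.fromBlocks_multiply, cornerBlock_mul]

theorem exists_cornerMatrix_add_smul_eq (a b c : Matrix (Fin 2) (Fin 2) ℤ) :
    ∃ B : Matrix m m ℤ, ∀ k : ℤ, cornerMatrix e a (b + k • c) = cornerMatrix e a b + k • B := by
  refine ⟨Matrix.reindex e e (Matrix.fromBlocks (cornerBlock a c) 0 0 0), fun k => ?_⟩
  have hblocks : Matrix.fromBlocks (cornerBlock a (b + k • c)) 0 0 1 =
      Matrix.fromBlocks (cornerBlock a b) 0 0 (1 : Matrix ν ν ℤ) +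
        k • Matrix.fromBlocks (cornerBlock a c) 0 0 0 := by
    simp only [Matrix.fromBlocks_smul, Matrix.fromBlocks_add, cornerBlock_add_smul, smul_zero,
      add_zero]
  rw [cornerMatrix, hblocks]
  rfl

variable [Fintype m] [DecidableEq m] [Finite ν]

/-- The representation `(a, b) ↦ (a ⊗ b) ⊕ 1`, in the corner basis, over `ℚ`. -/
def cornerHom : SL(2, ℤ) × SL(2, ℤ) →* GL m ℚ :=
  MonoidHom.toHomUnits <| (Int.castRingHom ℚ).mapMatrix.toMonoidHom.comp
    { toFun p := cornerMatrix e p.1 p.2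
      map_one' := cornerMatrix_one e
      map_mul' _ _ := cornerMatrix_mul e _ _ _ _ }

theorem coe_cornerHom (p : SL(2, ℤ) × SL(2, ℤ)) :
    (cornerHom e p : Matrix m m ℚ) = (cornerMatrix e p.1 p.2).map Int.cast :=
  rfl

/- The corner is the determinant of the columns `a e₁` and `b (e₁ + e₂)`, and `e₁ + e₂` is the image
of `e₁` under `parabolic 0 1`. -/
theorem cornerHom_corner (a b : SL(2, ℤ)) :
    (cornerHom e (a, b) : Matrix m m ℚ) (e (.inl (0, 0))) (e (.inl (0, 0))) =
      (a⁻¹ * b * parabolic 0 1) 1 0 := by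
  rw [coe_cornerHom, Matrix.map_apply, Int.cast_inj, cornerMatrix, Matrix.reindex_apply,
    Matrix.submatrix_apply, Equiv.symm_apply_apply, Matrix.fromBlocks_apply₁₁, cornerBlock_corner]
  rw [Matrix.SpecialLinearGroup.coe_mul, Matrix.SpecialLinearGroup.coe_mul,
    Matrix.SpecialLinearGroup.coe_inv, Matrix.adjugate_fin_two]
  simp [parabolic, Matrix.mul_apply, Matrix.vecMul, dotProduct, Fin.sum_univ_two]
  ring

theorem exists_cornerHom_parabolic_eq (a b : SL(2, ℤ)) (C : ℤ) :
    ∃ A B : Matrix m m ℤ, ∀ k : ℤ,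
      (cornerHom e (a, b * parabolic C k) : Matrix m m ℚ) = (A + k • B).map Int.cast := by
  obtain ⟨B, hB⟩ := exists_cornerMatrix_add_smul_eq e (a : Matrix (Fin 2) (Fin 2) ℤ) b
    (b * !![C, -C ^ 2; 1, -C])
  refine ⟨cornerMatrix e a b, B, fun k => ?_⟩
  rw [coe_cornerHom, ← hB, Matrix.SpecialLinearGroup.coe_mul, coe_parabolic, mul_add, mul_one,
    Matrix.mul_smul]

end Corner

section Mikhailova

/-- Mikhailova's generators of the fibre product of two copies of `G ⧸ normalClosure R`, where `s`
generates `G`. -/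
def mikhailovaGenerators {G : Type*} [Group G] (s R : Set G) : Set (G × G) :=
  (fun g => (g, g)) '' s ∪ (fun r => (1, r)) '' R

variable {G : Type*} [Group G] {s R : Set G}

theorem mikhailovaGenerators_insert (r : G) :
    mikhailovaGenerators s (insert r R) = insert (1, r) (mikhailovaGenerators s R) := by
  rw [mikhailovaGenerators, mikhailovaGenerators, Set.image_insert_eq, Set.union_insert]

theorem diag_mem_closure_mikhailovaGenerators (hs : Subgroup.closure s = ⊤) (g : G) :
    (g, g) ∈ Subgroup.closure (mikhailovaGenerators s R) := by
  have hle : Subgroup.closure s ≤ (Subgroup.closure (mikhailovaGenerators s R)).comap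
      ((MonoidHom.id G).prod (MonoidHom.id G)) :=
    (Subgroup.closure_le _).2 fun x hx => Subgroup.subset_closure (.inl ⟨x, hx, rfl⟩)
  exact hle (hs ▸ Subgroup.mem_top g)

theorem one_prod_mem_closure_mikhailovaGenerators (hs : Subgroup.closure s = ⊤) {w : G}
    (hw : w ∈ Subgroup.normalClosure R) :
    (1, w) ∈ Subgroup.closure (mikhailovaGenerators s R) := by
  let K := (Subgroup.closure (mikhailovaGenerators s R)).comap (MonoidHom.inr G G)
  have hK : K.Normal := ⟨fun v hv g => by
    have hg := diag_mem_closure_mikhailovaGenerators (R := R) hs g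
    simpa [K, Subgroup.mem_comap] using mul_mem (mul_mem hg hv) (inv_mem hg)⟩
  have hR : R ⊆ K := fun r hr => Subgroup.subset_closure (.inr ⟨r, hr, rfl⟩)
  exact Subgroup.normalClosure_le_normal hR hw

theorem mem_closure_mikhailovaGenerators_iff (hs : Subgroup.closure s = ⊤) {p : G × G} :
    p ∈ Subgroup.closure (mikhailovaGenerators s R) ↔
      p.1⁻¹ * p.2 ∈ Subgroup.normalClosure R := by
  rw [← QuotientGroup.eq]
  let π := QuotientGroup.mk' (Subgroup.normalClosure R)
  constructor
  · have hle : Subgroup.closure (mikhailovaGenerators s R) ≤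
        (π.comp (MonoidHom.fst G G)).eqLocus (π.comp (MonoidHom.snd G G)) := by
      rw [Subgroup.closure_le]
      rintro _ (⟨g, -, rfl⟩ | ⟨r, hr, rfl⟩)
      · rfl
      · exact (map_one π).trans
          ((QuotientGroup.eq_one_iff r).2 (Subgroup.subset_normalClosure hr)).symm
    exact fun hp => hle hp
  · intro hp
    have hmul := mul_mem (diag_mem_closure_mikhailovaGenerators (R := R) hs p.1)
      (one_prod_mem_closure_mikhailovaGenerators hs (QuotientGroup.eq.1 hp))
    simpa using hmul

end Mikhailova

section CornerRepresentation

variable {γ m ν : Type*} [Fintype m] [DecidableEq m] [Finite ν] [DecidableEq ν]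
  (C : γ → ℤ) (e : (Fin 2 × Fin 2) ⊕ ν ≃ m)

/-- The representation `(a, b) ↦ (ρ(a) ⊗ ρ(b)) ⊕ 1` of `F × F`, where `ρ = freeRep C`. -/
def cornerRep : FreeGroup γ × FreeGroup γ →* GL m ℚ :=
  (cornerHom e).comp ((freeRep C).prodMap (freeRep C))

variable {C}

theorem cornerRep_corner_eq_zero_iff (hC : Pairwise fun i j => 6 ≤ |C i - C j|) {z : γ}
    (hz : C z = 0) (a b : FreeGroup γ) :
    (cornerRep C e (a, b) : Matrix m m ℚ) (e (.inl (0, 0))) (e (.inl (0, 0))) = 0 ↔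
      a⁻¹ * b * .of z = 1 := by
  have hword : (freeRep C a)⁻¹ * freeRep C b * parabolic 0 1 =
      freeRep C (a⁻¹ * b * .of z) := by
    rw [map_mul, map_mul, map_inv, freeRep_of, hz]
  change (cornerHom e (freeRep C a, freeRep C b) : Matrix m m ℚ) _ _ = 0 ↔ _
  rw [cornerHom_corner, hword, Int.cast_eq_zero, freeRep_one_zero_eq_zero_iff hC]

theorem exists_mem_closure_corner_eq_zero_iff (hC : Pairwise fun i j => 6 ≤ |C i - C j|) {z : γ}
    (hz : C z = 0) {s R : Set (FreeGroup γ)} (hs : Subgroup.closure s = ⊤) :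
    (∃ g ∈ Subgroup.closure (cornerRep C e '' mikhailovaGenerators s R),
        (g : Matrix m m ℚ) (e (.inl (0, 0))) (e (.inl (0, 0))) = 0) ↔
      FreeGroup.of z ∈ Subgroup.normalClosure R := by
  rw [← MonoidHom.map_closure]
  constructor
  · rintro ⟨_, ⟨⟨a, b⟩, hmem, rfl⟩, hzero⟩
    rw [SetLike.mem_coe, mem_closure_mikhailovaGenerators_iff hs] at hmem
    rw [cornerRep_corner_eq_zero_iff e hC hz] at hzero
    rw [eq_inv_of_mul_eq_one_right hzero]
    exact inv_mem hmem
  · intro hmem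
    refine ⟨_, ⟨(1, (.of z)⁻¹), ?_, rfl⟩, (cornerRep_corner_eq_zero_iff e hC hz _ _).2 (by simp)⟩
    rw [SetLike.mem_coe, mem_closure_mikhailovaGenerators_iff hs]
    simpa using hmem

theorem exists_cornerRep_pow_eq (x y : FreeGroup γ) (i : γ) :
    ∃ A B : Matrix m m ℤ, ∀ c : ℕ,
      (cornerRep C e (x, y * .of i ^ c) : Matrix m m ℚ) = (A + (c : ℤ) • B).map Int.cast := by
  obtain ⟨A, B, hAB⟩ := exists_cornerHom_parabolic_eq e (freeRep C x) (freeRep C y) (C i)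
  refine ⟨A, B, fun c => ?_⟩
  rw [← hAB, ← parabolic_pow, ← freeRep_of, ← map_pow, ← map_mul]
  rfl

end CornerRepresentation

theorem exists_computable_generators {γ ν : Type*} [Finite γ] [Finite ν] {n : ℕ}
    (e : (Fin 2 × Fin 2) ⊕ ν ≃ Fin n) {R : Set (FreeGroup γ)} (hR : R.Finite) (x y z : γ)
    {g : ℕ → ℕ} (hg : Computable g) :
    ∃ X : ℕ → List (Matrix (Fin n) (Fin n) ℚ), Computable X ∧ ∀ k, (∀ M ∈ X k, IsUnit M) ∧
      ((∃ M ∈ Subgroup.closure {M : GL (Fin n) ℚ | (M : Matrix (Fin n) (Fin n) ℚ) ∈ X k},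
          (M : Matrix (Fin n) (Fin n) ℚ) (e (.inl (0, 0))) (e (.inl (0, 0))) = 0) ↔
        FreeGroup.of z ∈ Subgroup.normalClosure (insert ((.of y)⁻¹ * .of x ^ g k) R)) := by
  classical
  obtain ⟨C, hz, hC⟩ := exists_six_le_abs_sub z
  let φ := cornerRep C e
  let s : Set (FreeGroup γ) := Set.range .of
  let r (k : ℕ) : FreeGroup γ := (.of y)⁻¹ * .of x ^ g k
  have hfin : (φ '' mikhailovaGenerators s R).Finite :=
    (((Set.finite_range _).image _).union (hR.image _)).image _
  let L : List (Matrix (Fin n) (Fin n) ℚ) := hfin.toFinset.toList.map Units.val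
  refine ⟨fun k => φ (1, r k) :: L, ?_, fun k => ⟨?_, ?_⟩⟩
  · obtain ⟨A, B, hAB⟩ := exists_cornerRep_pow_eq (C := C) e 1 (.of y)⁻¹ x
    exact (Computable.list_cons.comp (computable_affine_matrix A B hg) (.const L)).of_eq
      fun k => by rw [← hAB]
  · rw [List.forall_mem_cons, List.forall_mem_map]
    exact ⟨Units.isUnit _, fun M _ => M.isUnit⟩
  · have hgens : {M : GL (Fin n) ℚ | (M : Matrix (Fin n) (Fin n) ℚ) ∈ (φ (1, r k)).val :: L} =
        φ '' mikhailovaGenerators s (insert (r k) R) := by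
      ext M
      simp [L, mikhailovaGenerators_insert, Set.image_insert_eq, Units.val_inj]
    rw [hgens]
    exact exists_mem_closure_corner_eq_zero_iff e hC hz (FreeGroup.closure_range_of γ)

theorem iff_of_eqvGen {α : Type*} {r : α → α → Prop} {p : α → Prop}
    (hp : ∀ a b, r a b → (p a ↔ p b)) {a b : α} (h : Relation.EqvGen r a b) : p a ↔ p b :=
  (Equivalence.eqvGen_iff (r := fun a b => p a ↔ p b) ⟨fun _ => Iff.rfl, Iff.symm, Iff.trans⟩).1
    (h.mono hp)

section AffineMoves

/-- The affine map `u ↦ step * u + base` of `ℤ^ι`, acting coordinatewise and injective; it stands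
for the vectors in its range. -/
structure Progression (ι : Type*) where
  step : ι → ℤ
  base : ι → ℤ
  step_ne_zero : ∀ i, step i ≠ 0

instance {ι : Type*} : CoeFun (Progression ι) fun _ => (ι → ℤ) → ι → ℤ :=
  ⟨fun P u => P.step * u + P.base⟩

/-- An affine move replaces the vector `source u` by `target u`, for every `u`. -/
structure AffineMove (ι : Type*) where
  source : Progression ι
  target : Progression ι

/-- One of the affine moves of the family `μ` sends `z` to `z'`. -/
def AffineStep {ι κ : Type*} (μ : κ → AffineMove ι) (z z' : ι → ℤ) : Prop :=
  ∃ i u, z = (μ i).source u ∧ z' = (μ i).target u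

end AffineMoves

section VectorPower

variable {ι G : Type*} [Fintype ι] [Group G] (X : ι → G)

/-- The product of the powers `X j ^ a j`, in an arbitrary order; it is meant for commuting `X j`,
but is also needed as a word of a free group. -/
noncomputable def vecPow (a : ι → ℤ) : G :=
  (Finset.univ.toList.map fun j => X j ^ a j).prod

/-- The conjugate of `T` by the power `vecPow X a`. -/
noncomputable def vecConj (T : G) (a : ι → ℤ) : G :=
  vecPow X a * T * (vecPow X a)⁻¹

theorem map_vecPow {H : Type*} [Group H] (f : G →* H) (a : ι → ℤ) :
    f (vecPow X a) = vecPow (fun j => f (X j)) a := by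
  simp only [vecPow, map_list_prod, List.map_map, Function.comp_def, map_zpow]

theorem map_vecConj {H : Type*} [Group H] (f : G →* H) (T : G) (a : ι → ℤ) :
    f (vecConj X T a) = vecConj (fun j => f (X j)) (f T) a := by
  simp only [vecConj, map_mul, map_inv, map_vecPow]

theorem vecPow_zero : vecPow X 0 = 1 := by
  simp [vecPow]

theorem vecConj_zero (T : G) : vecConj X T 0 = T := by
  rw [vecConj, vecPow_zero, one_mul, inv_one, mul_one]

theorem vecPow_single [DecidableEq ι] (j : ι) (c : ℤ) : vecPow X (Pi.single j c) = X j ^ c := by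
  rw [vecPow, List.prod_map_eq_pow_single j, Pi.single_eq_same,
    List.count_eq_one_of_mem (Finset.nodup_toList _) (Finset.mem_toList.2 (Finset.mem_univ j)),
    pow_one]
  intro i hi _
  rw [Pi.single_eq_of_ne hi, zpow_zero]

variable {X}

theorem vecPow_add (hX : ∀ i j, Commute (X i) (X j)) (a b : ι → ℤ) :
    vecPow X (a + b) = vecPow X a * vecPow X b := by
  unfold vecPow
  induction (Finset.univ : Finset ι).toList with
  | nil => simp only [List.map_nil, List.prod_nil, mul_one]
  | cons j l ih =>
    have hcomm : Commute (X j ^ b j) (l.map fun j => X j ^ a j).prod :=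
      Commute.list_prod_right _ _ <| List.forall_mem_map.2 fun i _ => (hX j i).zpow_zpow _ _
    simp only [List.map_cons, List.prod_cons, Pi.add_apply, zpow_add] at ih ⊢
    rw [ih, hcomm.mul_mul_mul_comm]

theorem vecConj_add (hX : ∀ i j, Commute (X i) (X j)) (T : G) (a b : ι → ℤ) :
    vecConj X T (a + b) = vecPow X a * vecConj X T b * (vecPow X a)⁻¹ := by
  simp only [vecConj, vecPow_add hX, mul_inv_rev, mul_assoc]

theorem semiconjBy_vecPow {r : G} {m p : ι → ℤ} (h : ∀ j, SemiconjBy r (X j ^ m j) (X j ^ p j))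
    (u : ι → ℤ) : SemiconjBy r (vecPow X (m * u)) (vecPow X (p * u)) := by
  unfold vecPow
  induction (Finset.univ : Finset ι).toList with
  | nil => exact SemiconjBy.one_right r
  | cons j l ih =>
    simp only [List.map_cons, List.prod_cons, Pi.mul_apply, zpow_mul] at ih ⊢
    exact ((h j).zpow_right _).mul_right ih

end VectorPower

section Realization

variable {ι κ G : Type*} [Fintype ι] [Group G]

/-- Elements of a group such that conjugation by `r i` realizes the affine move `μ i` on the
conjugates `vecConj X T z` of `T`. -/
structure IsRealization (μ : κ → AffineMove ι) (X : ι → G) (r : κ → G) (T : G) : Prop where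
  commute : ∀ i j, Commute (X i) (X j)
  semiconjBy_zpow : ∀ i j,
    SemiconjBy (r i) (X j ^ (μ i).source.step j) (X j ^ (μ i).target.step j)
  semiconjBy_vecConj_base : ∀ i,
    SemiconjBy (r i) (vecConj X T (μ i).source.base) (vecConj X T (μ i).target.base)

variable {μ : κ → AffineMove ι} {X : ι → G} {r : κ → G} {T : G}

theorem isRealization_iff :
    IsRealization μ X r T ↔
      (∀ i j, Commute (X i) (X j)) ∧
      (∀ i j, SemiconjBy (r i) (X j ^ (μ i).source.step j) (X j ^ (μ i).target.step j)) ∧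
      (∀ i, SemiconjBy (r i) (vecConj X T (μ i).source.base) (vecConj X T (μ i).target.base)) :=
  ⟨fun ⟨hX, hpow, hbase⟩ => ⟨hX, hpow, hbase⟩, fun ⟨hX, hpow, hbase⟩ => ⟨hX, hpow, hbase⟩⟩

namespace IsRealization

theorem map {G' : Type*} [Group G'] (h : IsRealization μ X r T) (f : G →* G') :
    IsRealization μ (fun j => f (X j)) (fun i => f (r i)) (f T) where
  commute i j := (h.commute i j).map f
  semiconjBy_zpow i j := by simpa only [map_zpow] using (h.semiconjBy_zpow i j).map f
  semiconjBy_vecConj_base i := by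
    simpa only [map_vecConj] using (h.semiconjBy_vecConj_base i).map f

theorem semiconjBy_vecConj (h : IsRealization μ X r T) (i : κ) (u : ι → ℤ) :
    SemiconjBy (r i) (vecConj X T ((μ i).source u)) (vecConj X T ((μ i).target u)) := by
  have hpow := semiconjBy_vecPow (h.semiconjBy_zpow i) u
  rw [vecConj_add h.commute, vecConj_add h.commute]
  exact (hpow.mul_right (h.semiconjBy_vecConj_base i)).mul_right hpow.inv_right

theorem vecConj_mem_iff_of_eqvGen (h : IsRealization μ X r T) {H : Subgroup G}
    (hr : ∀ i, r i ∈ H) {z z' : ι → ℤ} (hz : Relation.EqvGen (AffineStep μ) z z') :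
    vecConj X T z ∈ H ↔ vecConj X T z' ∈ H := by
  refine iff_of_eqvGen (p := fun z => vecConj X T z ∈ H) ?_ hz
  rintro _ _ ⟨i, u, rfl, rfl⟩
  rw [← mul_inv_eq_of_eq_mul (h.semiconjBy_vecConj i u), H.mul_mem_cancel_right (inv_mem (hr i)),
    H.mul_mem_cancel_left (hr i)]

end IsRealization

end Realization

/-- Enlarging `G ⧸ H` by a fixed point turns any subgroup `H` into the centralizer of a
transposition. -/
theorem exists_commute_toPermHom_iff {G : Type*} [Group G] (H : Subgroup G) :
    ∃ K : Equiv.Perm (Option (G ⧸ H)),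
      ∀ g, Commute K (MulAction.toPermHom G (Option (G ⧸ H)) g) ↔ g ∈ H := by
  classical
  refine ⟨Equiv.swap none (some (1 : G)), fun g => ?_⟩
  have hswap (a b : Option (G ⧸ H)) : Equiv.swap none a = Equiv.swap none b ↔ a = b :=
    ⟨fun h => by simpa only [Equiv.swap_apply_left] using DFunLike.congr_fun h none, congrArg _⟩
  rw [commute_iff_eq, eq_comm, ← mul_inv_eq_iff_eq_mul, ← Equiv.swap_apply_apply,
    MulAction.toPermHom_apply, MulAction.toPerm_apply, MulAction.toPerm_apply, Option.smul_none,
    Option.smul_some, MulAction.Quotient.smul_mk, smul_eq_mul, mul_one, hswap, Option.some_inj,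
    eq_comm, QuotientGroup.eq, inv_one, one_mul]

section Presentation

open FreeGroup (of)
open scoped commutatorElement

/-- Generators of the group attached to a family of affine moves. -/
inductive AffineGen (ι κ : Type*)
  | z | k | y | t
  | x (j : ι)
  | r (i : κ)
  deriving Fintype

variable {ι κ G : Type*} [Fintype ι] [Group G]

open AffineGen in
/-- Relators making `x`, `r`, `t` a realization of the affine moves `μ` in which `k` commutes with
all `r i` and `t`, and `z` the commutator of `k` with the conjugate of `vecConj x t v` by `y`. -/
def affineRelators (μ : κ → AffineMove ι) (v : ι → ℤ) : Set (FreeGroup (AffineGen ι κ)) :=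
  Set.range (fun s : ι × ι => ⁅of (x s.1 : AffineGen ι κ), of (x s.2)⁆) ∪
  Set.range (fun s : κ × ι => of (r s.1) * of (x s.2) ^ (μ s.1).source.step s.2 *
    (of (r s.1))⁻¹ * (of (x s.2) ^ (μ s.1).target.step s.2)⁻¹) ∪
  Set.range (fun i : κ => of (r i) * vecConj (fun j => of (x j)) (of t) (μ i).source.base *
    (of (r i))⁻¹ * (vecConj (fun j => of (x j)) (of t) (μ i).target.base)⁻¹) ∪
  Set.range (fun i : κ => ⁅of (k : AffineGen ι κ), of (r i)⁆) ∪
  {⁅of (k : AffineGen ι κ), of t⁆,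
    (of z)⁻¹ * ⁅of (k : AffineGen ι κ), of y * vecConj (fun j => of (x j)) (of t) v * (of y)⁻¹⁆}

theorem finite_affineRelators [Finite κ] (μ : κ → AffineMove ι) (v : ι → ℤ) :
    (affineRelators μ v).Finite :=
  ((((Set.finite_range _).union (Set.finite_range _)).union (Set.finite_range _)).union
    (Set.finite_range _)).union (Set.toFinite _)

theorem forall_mem_affineRelators_map_eq_one_iff (μ : κ → AffineMove ι) (v : ι → ℤ)
    (f : FreeGroup (AffineGen ι κ) →* G) :
    (∀ w ∈ affineRelators μ v, f w = 1) ↔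
      IsRealization μ (fun j => f (of (.x j))) (fun i => f (of (.r i))) (f (of .t)) ∧
      (∀ i, Commute (f (of .k)) (f (of (.r i)))) ∧ Commute (f (of .k)) (f (of .t)) ∧
      f (of .z) = ⁅f (of .k), f (of .y) * vecConj (fun j => f (of (.x j))) (f (of .t)) v *
        (f (of .y))⁻¹⁆ := by
  simp only [affineRelators, Set.mem_union, or_imp, forall_and, Set.forall_mem_range,
    Set.mem_insert_iff, Set.mem_singleton_iff, forall_eq, Prod.forall, and_assoc, map_mul,
    map_commutatorElement, map_inv, map_zpow, commutatorElement_eq_one_iff_commute, map_vecConj,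
    one_mul, inv_mul_eq_one, isRealization_iff, SemiconjBy, mul_inv_eq_iff_eq_mul]

open AffineGen in
theorem of_z_mem_normalClosure_of_eqvGen [DecidableEq ι] {μ : κ → AffineMove ι} {v : ι → ℤ} {j : ι}
    {c : ℕ} (h : Relation.EqvGen (AffineStep μ) (Pi.single j (c : ℤ) + v) 0) :
    of z ∈ Subgroup.normalClosure (insert ((of y)⁻¹ * of (x j) ^ c) (affineRelators μ v)) := by
  set R := insert ((of y)⁻¹ * of (x j) ^ c) (affineRelators μ v)
  let f := QuotientGroup.mk' (Subgroup.normalClosure R)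
  have hf : ∀ w ∈ R, f w = 1 := fun w hw =>
    (QuotientGroup.eq_one_iff w).2 (Subgroup.subset_normalClosure hw)
  obtain ⟨hreal, hr, ht, hz⟩ := (forall_mem_affineRelators_map_eq_one_iff μ v f).1
    fun w hw => hf w (.inr hw)
  have hy : f (of y) = f (of (x j)) ^ (c : ℤ) := by
    rw [zpow_natCast, ← map_pow, ← inv_mul_eq_one, ← map_inv, ← map_mul]
    exact hf _ (.inl rfl)
  let H := Subgroup.centralizer {f (of k)}
  have hmem : vecConj (fun j => f (of (x j))) (f (of t)) (Pi.single j (c : ℤ) + v) ∈ H := by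
    rw [hreal.vecConj_mem_iff_of_eqvGen
      (fun i => Subgroup.mem_centralizer_singleton_iff.2 (hr i).symm) h, vecConj_zero]
    exact Subgroup.mem_centralizer_singleton_iff.2 ht.symm
  rw [vecConj_add hreal.commute, vecPow_single, ← hy,
    Subgroup.mem_centralizer_singleton_iff] at hmem
  refine (QuotientGroup.eq_one_iff _).1 (hz.trans ?_)
  exact commutatorElement_eq_one_iff_mul_comm.2 hmem.symm

open AffineGen in
theorem IsRealization.vecConj_mem_of_mem_normalClosure [DecidableEq ι] {μ : κ → AffineMove ι}
    {X : ι → G} {r : κ → G} {T : G} (hreal : IsRealization μ X r T) {H : Subgroup G}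
    (hr : ∀ i, r i ∈ H) (hT : T ∈ H) {v : ι → ℤ} {j : ι} {c : ℕ}
    (h : of z ∈ Subgroup.normalClosure
      (insert ((of y)⁻¹ * of (x j) ^ c) (affineRelators μ v))) :
    vecConj X T (Pi.single j (c : ℤ) + v) ∈ H := by
  obtain ⟨K, hK⟩ := exists_commute_toPermHom_iff H
  let d := MulAction.toPermHom G (Option (G ⧸ H))
  let f : FreeGroup (AffineGen ι κ) →* Equiv.Perm (Option (G ⧸ H)) := FreeGroup.lift fun
    | .z => ⁅K, d (X j) ^ c * vecConj (fun i => d (X i)) (d T) v * (d (X j) ^ c)⁻¹⁆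
    | .k => K
    | .y => d (X j) ^ c
    | .t => d T
    | .x i => d (X i)
    | .r i => d (r i)
  have hle : Subgroup.normalClosure (insert ((of y)⁻¹ * of (x j) ^ c) (affineRelators μ v))
      ≤ f.ker := by
    refine Subgroup.normalClosure_le_normal (Set.insert_subset ?_ ?_)
    · simp [f, MonoidHom.mem_ker]
    · refine (forall_mem_affineRelators_map_eq_one_iff μ v f).2 ?_
      simp only [f, FreeGroup.lift_apply_of]
      exact ⟨hreal.map d, fun i => (hK _).2 (hr i), (hK _).2 hT, trivial⟩
  have hz : f (of z) = 1 := hle h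
  simp only [f, FreeGroup.lift_apply_of] at hz
  rw [← zpow_natCast, ← vecPow_single (fun i => d (X i)), ← vecConj_add (hreal.map d).commute,
    commutatorElement_eq_one_iff_commute, ← map_vecConj X d] at hz
  exact (hK _).1 hz

end Presentation

section Equivalences

theorem exists_equiv_prod_fst_eq {α C M : Type*} {f : α → C} (g : α ↪ M)
    (h : ∀ c, M ↪ {a // f a = c}) : ∃ β : α ≃ C × M, ∀ a, (β a).1 = f a := by
  have e (c) : {a // f a = c} ≃ M :=
    (((Function.Embedding.subtype _).trans g).antisymm (h c)).some
  exact ⟨((Equiv.sigmaFiberEquiv f).symm.trans (Equiv.sigmaCongrRight e)).trans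
    (Equiv.sigmaEquivProd C M), fun _ => rfl⟩

theorem exists_equiv_apply_eq_pair {α β C : Type*} (e : α ≃ β) (f : β → C) {a a' : α} {b b' : β}
    (ha : a ≠ a') (hb : b ≠ b') (hab : f (e a) = f b) (hab' : f (e a') = f b') :
    ∃ e' : α ≃ β, e' a = b ∧ e' a' = b' ∧ ∀ x, f (e' x) = f (e x) := by
  classical
  let e₁ := e.trans (Equiv.swap (e a) b)
  have he₁ : e₁ a = b := Equiv.swap_apply_left _ _
  have hf₁ (x) : f (e₁ x) = f (e x) := Equiv.apply_swap_eq_self hab _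
  refine ⟨e₁.trans (Equiv.swap (e₁ a') b'), ?_, Equiv.swap_apply_left _ _, fun x => ?_⟩
  · rw [Equiv.trans_apply, ← he₁]
    exact Equiv.swap_apply_of_ne_of_ne (e₁.injective.ne ha) (he₁ ▸ hb)
  · exact (Equiv.apply_swap_eq_self ((hf₁ a').trans hab') _).trans (hf₁ x)

theorem exists_bijective_add_mem {V : Type*} [AddCommGroup V] {φ : V →+ V}
    (hφ : Function.Injective φ) (a : V) :
    ∃ T : Set V, a ∈ T ∧ Function.Bijective fun s : V × T => φ s.1 + s.2 := by
  obtain ⟨T, hT, ha⟩ := φ.range.exists_isComplement_right a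
  exact ⟨T, ha, hT.comp ((AddMonoidHom.ofInjective hφ).toEquiv.prodCongr (.refl T)).bijective⟩

end Equivalences

section PermutationModel

/-- Lines of the permutation model: a set of marked points, and an index providing enough copies of
each line. The choice of lists lets `V × Line V` be embedded into the indices by `List.cons`. -/
abbrev Line (V : Type*) := Set V × List (V × Set V)

/-- The marked points of the permutation model `V × Line V`. -/
def marked (V : Type*) : Set (V × Line V) := {ω | ω.1 ∈ ω.2.1}

variable {V : Type*} [AddCommGroup V]

/-- A fully marked line and a line marked along `S`. -/
def specialLine (S : Set V) : Bool → Line V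
  | false => (Set.univ, [])
  | true => (S, [(0, ∅)])

theorem specialLine_false_ne_true (S S' : Set V) : specialLine S false ≠ specialLine S' true :=
  fun h => List.cons_ne_nil _ _ (congrArg Prod.snd h).symm

/-- The translations of the permutation model along its lines. -/
def translation : Multiplicative V →* Equiv.Perm (V × Line V) where
  toFun a := (Equiv.addLeft a.toAdd).prodCongr (Equiv.refl _)
  map_one' := by ext1 ω; exact Prod.ext (zero_add ω.1) rfl
  map_mul' a b := by ext1 ω; exact Prod.ext (add_assoc a.toAdd b.toAdd ω.1) rfl

theorem translation_apply (a z : V) (l : Line V) : translation (.ofAdd a) (z, l) = (a + z, l) :=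
  rfl

variable {φ : V →+ V}

theorem exists_reindexing (hφ : Function.Injective φ) {T : Set V} (a : T) (S : Set V) :
    ∃ β : T × Line V ≃ Line V,
      (∀ ρ l, (β (ρ, l)).1 = (fun u => φ u + (ρ : V)) ⁻¹' l.1) ∧
      ∀ b, β (a, specialLine S b) = specialLine ((fun u => φ u + (a : V)) ⁻¹' S) b := by
  let f (s : T × Line V) : Set V := (fun u => φ u + (s.1 : V)) ⁻¹' s.2.1
  have hinj : Function.Injective fun u => φ u + (a : V) := (add_left_injective _).comp hφ
  let toIndex : T × Line V ↪ List (V × Set V) :=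
    ⟨fun s => (s.1, s.2.1) :: s.2.2, fun s t h => by
      obtain ⟨hhead, htail⟩ := List.cons.inj h
      obtain ⟨h₁, h₂⟩ := Prod.mk.inj hhead
      exact Prod.ext (Subtype.ext h₁) (Prod.ext h₂ htail)⟩
  let ofIndex (P : Set V) : List (V × Set V) ↪ {s // f s = P} :=
    ⟨fun i => ⟨(a, ((fun u => φ u + (a : V)) '' P, i)), Set.preimage_image_eq P hinj⟩,
      fun i j h => congrArg (fun s => s.1.2.2) h⟩
  obtain ⟨β, hβ⟩ := exists_equiv_prod_fst_eq toIndex ofIndex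
  obtain ⟨β', hfalse, htrue, hβ'⟩ := exists_equiv_apply_eq_pair β Prod.fst
    (a := (a, specialLine S false)) (a' := (a, specialLine S true))
    (fun h => specialLine_false_ne_true S S (congrArg Prod.snd h))
    (specialLine_false_ne_true _ (f (a, specialLine S true))) (hβ _) (hβ _)
  exact ⟨β', fun ρ l => (hβ' _).trans (hβ _), Bool.rec hfalse htrue⟩

theorem exists_rescaling (hφ : Function.Injective φ) (a : V) (S : Set V) :
    ∃ E : Equiv.Perm (V × Line V),
      (∀ u, SemiconjBy E (translation (.ofAdd (φ u))) (translation (.ofAdd u))) ∧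
      (∀ b, E (a, specialLine S b) = (0, specialLine ((fun u => φ u + a) ⁻¹' S) b)) ∧
      ∀ ω, E ω ∈ marked V ↔ ω ∈ marked V := by
  obtain ⟨T, ha, hT⟩ := exists_bijective_add_mem hφ a
  obtain ⟨β, hlabel, hspecial⟩ := exists_reindexing hφ ⟨a, ha⟩ S
  let e : V × T ≃ V := Equiv.ofBijective _ hT
  let E : Equiv.Perm (V × Line V) := ((e.symm.prodCongr (Equiv.refl _)).trans
    (Equiv.prodAssoc _ _ _)).trans ((Equiv.refl V).prodCongr β)
  have hE (u ρ l) : E (φ u + (ρ : T), l) = (u, β (ρ, l)) :=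
    congrArg (fun s : V × T => (s.1, β (s.2, l))) (e.symm_apply_apply (u, ρ))
  refine ⟨E, fun u => ?_, fun b => ?_, ?_⟩
  · ext1 ⟨z, l⟩
    obtain ⟨⟨v, ρ⟩, rfl⟩ := hT.surjective z
    simp only [Equiv.Perm.mul_apply, translation_apply, ← add_assoc, ← map_add, hE]
  · simpa only [map_zero, zero_add, hspecial] using hE 0 ⟨a, ha⟩ (specialLine S b)
  · rintro ⟨z, l⟩
    obtain ⟨⟨v, ρ⟩, rfl⟩ := hT.surjective z
    simp only [hE, marked, Set.mem_ofPred_eq, hlabel, Set.mem_preimage]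

open scoped Pointwise in
theorem exists_semiconjBy_translation {ψ : V →+ V} (hφ : Function.Injective φ)
    (hψ : Function.Injective ψ) {a b : V} {S : Set V}
    (hS : (fun u => φ u + a) ⁻¹' S = (fun u => ψ u + b) ⁻¹' S) :
    ∃ R ∈ MulAction.stabilizer (Equiv.Perm (V × Line V)) (marked V),
      (∀ u, SemiconjBy R (translation (.ofAdd (φ u))) (translation (.ofAdd (ψ u)))) ∧
      ∀ ε, R (a, specialLine S ε) = (b, specialLine S ε) := by
  obtain ⟨E, hE, hEspecial, hEmarked⟩ := exists_rescaling hφ a S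
  obtain ⟨F, hF, hFspecial, hFmarked⟩ := exists_rescaling hψ b S
  refine ⟨F⁻¹ * E, mul_mem (inv_mem ?_) ?_, fun u => (hF u).inv_symm_left.mul_left (hE u),
    fun ε => ?_⟩
  · exact MulAction.mem_stabilizer_set.2 hFmarked
  · exact MulAction.mem_stabilizer_set.2 hEmarked
  · rw [Equiv.Perm.mul_apply, Equiv.Perm.inv_eq_iff_eq, hEspecial, hFspecial, hS]

end PermutationModel

section ModelRealization

universe u

variable {ι : Type u} {κ : Type*}

theorem Progression.injective_mulLeft_step (P : Progression ι) :
    Function.Injective (AddMonoidHom.mulLeft P.step) :=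
  fun _ _ h => funext fun i => mul_left_cancel₀ (P.step_ne_zero i) (congrFun h i)

theorem preimage_source_eq_preimage_target (μ : κ → AffineMove ι) (z : ι → ℤ) (i : κ) :
    (μ i).source ⁻¹' {z' | Relation.EqvGen (AffineStep μ) z' z} =
      (μ i).target ⁻¹' {z' | Relation.EqvGen (AffineStep μ) z' z} := by
  ext u
  have hu : Relation.EqvGen (AffineStep μ) ((μ i).source u) ((μ i).target u) :=
    .rel _ _ ⟨i, u, rfl, rfl⟩
  exact ⟨(hu.symm _ _).trans _ _ _, hu.trans _ _ _⟩

variable [Fintype ι]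

theorem vecPow_translation [DecidableEq ι] (a : ι → ℤ) :
    vecPow (fun j => translation (.ofAdd (Pi.single j (1 : ℤ)))) a = translation (.ofAdd a) := by
  rw [← map_vecPow (fun j : ι => Multiplicative.ofAdd (Pi.single j (1 : ℤ))) translation]
  congr 1
  rw [vecPow, Finset.prod_map_toList]
  simp only [← ofAdd_zsmul, ← ofAdd_sum, ← Pi.single_smul, smul_eq_mul, mul_one,
    Finset.univ_sum_single]

open scoped Pointwise in
theorem exists_isRealization (μ : κ → AffineMove ι) (z₀ : ι → ℤ) :
    ∃ (G : Type u) (_ : Group G) (X : ι → G) (r : κ → G) (T : G) (H : Subgroup G),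
      IsRealization μ X r T ∧ (∀ i, r i ∈ H) ∧
        ∀ z, vecConj X T z ∈ H ↔ Relation.EqvGen (AffineStep μ) z z₀ := by
  classical
  let S : Set (ι → ℤ) := {z | Relation.EqvGen (AffineStep μ) z z₀}
  choose R hmem htranslation hspecial using fun i => exists_semiconjBy_translation
    (μ i).source.injective_mulLeft_step (μ i).target.injective_mulLeft_step
    (preimage_source_eq_preimage_target μ z₀ i)
  let X (j : ι) : Equiv.Perm ((ι → ℤ) × Line (ι → ℤ)) := translation (.ofAdd (Pi.single j 1))
  let T : Equiv.Perm ((ι → ℤ) × Line (ι → ℤ)) :=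
    Equiv.swap (0, specialLine S false) (0, specialLine S true)
  have hT (z) : vecConj X T z = Equiv.swap (z, specialLine S false) (z, specialLine S true) := by
    rw [vecConj, vecPow_translation, ← Equiv.swap_apply_apply, translation_apply,
      translation_apply, add_zero]
  have hX (j) (w : ι → ℤ) : X j ^ w j = translation (.ofAdd (w * Pi.single j 1)) := by
    rw [← Pi.single_mul_right, mul_one, ← vecPow_translation, vecPow_single]
  refine ⟨_, _, X, R, T, MulAction.stabilizer _ (marked (ι → ℤ)),
    ⟨fun i j => (Commute.all _ _).map translation, fun i j => ?_, fun i => ?_⟩, hmem, fun z => ?_⟩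
  · rw [hX, hX]
    exact htranslation i (Pi.single j 1)
  · rw [hT, hT, ← hspecial, ← hspecial, SemiconjBy, Equiv.mul_swap_eq_swap_mul]
  · rw [hT, Equiv.swap_mem_stabilizer]
    exact ⟨fun h => h.1 trivial, fun h => iff_of_true trivial h⟩

open AffineGen FreeGroup in
theorem of_z_mem_normalClosure_iff [DecidableEq ι] {μ : κ → AffineMove ι} {v : ι → ℤ} {j : ι}
    {c : ℕ} :
    of z ∈ Subgroup.normalClosure (insert ((of y)⁻¹ * of (x j) ^ c) (affineRelators μ v)) ↔
      Relation.EqvGen (AffineStep μ) (Pi.single j (c : ℤ) + v) 0 := by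
  refine ⟨fun h => ?_, of_z_mem_normalClosure_of_eqvGen⟩
  obtain ⟨G, _, X, r, T, H, hreal, hr, hH⟩ := exists_isRealization μ 0
  have hT : T ∈ H := by
    rw [← vecConj_zero X T, hH]
    exact .refl 0
  exact (hH _).1 (hreal.vecConj_mem_of_mem_normalClosure hr hT h)

end ModelRealization

section StackMachine

/-- A machine with stacks indexed by `K`: in state `q` the top symbol `h` of the stack `key q`, if
there is one, is replaced by the word `(act q h).2`, and the state becomes `(act q h).1`, where
`none` is the final state. -/
structure StackMachine (Q K Γ : Type*) where
  key : Q → K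
  act : Q → Option Γ → Option Q × List Γ

theorem exists_reflTransGen_of_eqvGen {α : Type*} {r s : α → α → Prop} {Z : Set α} {a b : α}
    (hr : Relator.RightUnique r) (hrZ : ∀ x y, r x y → x ∉ Z)
    (hs : ∀ x y, s x y → r x y ∨ x ∈ Z ∧ y ∈ Z) (h : Relation.EqvGen s a b) (hb : b ∈ Z) :
    ∃ z ∈ Z, Relation.ReflTransGen r a z := by
  refine (iff_of_eqvGen (p := fun x => ∃ z ∈ Z, Relation.ReflTransGen r x z)
    (fun x y hxy => ?_) h).2 ⟨b, hb, .refl⟩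
  rcases hs x y hxy with hxy | ⟨hx, hy⟩
  · refine ⟨?_, fun ⟨z, hz, hyz⟩ => ⟨z, hz, hyz.head hxy⟩⟩
    rintro ⟨z, hz, hxz⟩
    obtain rfl | ⟨w, hxw, hwz⟩ := hxz.cases_head
    · exact absurd hz (hrZ _ _ hxy)
    · exact ⟨z, hz, hr hxy hxw ▸ hwz⟩
  · exact iff_of_true ⟨x, hx, .refl⟩ ⟨y, hy, .refl⟩

theorem affineStep_sumElim {ι κ κ' : Type*} {μ : κ → AffineMove ι} {μ' : κ' → AffineMove ι}
    {z z' : ι → ℤ} :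
    AffineStep (Sum.elim μ μ') z z' ↔ AffineStep μ z z' ∨ AffineStep μ' z z' := by
  simp only [AffineStep, Sum.exists, Sum.elim_inl, Sum.elim_inr]

/-- The base in which `digit` takes its values. -/
noncomputable abbrev radix (α : Type*) : ℕ := Nat.card α + 1

/-- A numbering of `Option α` by the digits in base `radix α`. -/
noncomputable def digit {α : Type*} [Finite α] : Option α → ℕ
  | none => 0
  | some a => Finite.equivFin α a + 1

theorem digit_lt {α : Type*} [Finite α] (x : Option α) : digit x < radix α := by
  cases x <;> simp [digit]

theorem digit_injective {α : Type*} [Finite α] :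
    Function.Injective (digit : Option α → ℕ) := by
  rintro (_ | a) (_ | a') h <;> simp_all [digit, Fin.val_inj]

theorem radix_dvd_digit {α : Type*} [Finite α] {x : Option α} :
    radix α ∣ digit x ↔ x = none :=
  ⟨fun h => digit_injective (Nat.eq_zero_of_dvd_of_lt h (digit_lt x)), fun h => h ▸ dvd_zero _⟩

/-- The number whose digits, starting from the lowest, are the letters of a word. -/
noncomputable def encodeWord {Γ : Type*} [Finite Γ] (l : List Γ) : ℕ :=
  Nat.ofDigits (radix Γ) (l.map fun a => digit (some a))

theorem encodeWord_cons {Γ : Type*} [Finite Γ] (a : Γ) (l : List Γ) :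
    encodeWord (a :: l) = digit (some a) + radix Γ * encodeWord l :=
  Nat.ofDigits_cons

theorem encodeWord_eq {Γ : Type*} [Finite Γ] (l : List Γ) :
    encodeWord l = radix Γ * encodeWord l.tail + digit l.head? := by
  cases l with
  | nil => simp [encodeWord, digit]
  | cons a l => rw [encodeWord_cons, add_comm, List.tail_cons, List.head?_cons]

theorem encodeWord_append {Γ : Type*} [Finite Γ] (l l' : List Γ) :
    encodeWord (l ++ l') = radix Γ ^ l.length * encodeWord l' + encodeWord l := by
  simp only [encodeWord, List.map_append, Nat.ofDigits_append, List.length_map, add_comm]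

theorem eq_of_mul_add_eq_mul_add {m a a' : ℕ} {u u' : ℤ} (ha : a < m) (ha' : a' < m)
    (h : (m : ℤ) * u + a = m * u' + a') : a = a' := by
  have hmod : (a : ℤ) % m = a' % m := by
    simpa only [Int.mul_add_emod_self_left] using congrArg (· % (m : ℤ)) h
  exact Nat.ModEq.eq_of_lt_of_lt (by exact_mod_cast hmod) ha ha'

namespace StackMachine

variable {Q K Γ : Type*}

section Encoding

variable [Finite Q] [Finite Γ]

/-- The vector encoding a state and the contents of the stacks. -/
noncomputable def encodeConfig (c : Option Q × (K → List Γ)) : Option K → ℤ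
  | none => digit c.1
  | some k => encodeWord (c.2 k)

theorem radix_dvd_encodeConfig_none {c : Option Q × (K → List Γ)} :
    (radix Q : ℤ) ∣ encodeConfig c none ↔ c.1 = none :=
  Int.natCast_dvd_natCast.trans radix_dvd_digit

variable [DecidableEq K]

/-- The vectors whose coordinates at `none` and `some k` are congruent to `digit q` modulo `radix Q`
and to `a` modulo `m`, respectively. -/
noncomputable def stackProgression (q : Option Q) (k : K) (m a : ℕ) [NeZero m] :
    Progression (Option K) where
  step j := j.elim (radix Q) (Pi.mulSingle k (m : ℤ))
  base j := j.elim (digit q) (Pi.single k (a : ℤ))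
  step_ne_zero j := by
    rcases j with _ | k'
    · exact Nat.cast_ne_zero.2 (NeZero.ne (radix Q))
    · obtain rfl | hk := eq_or_ne k' k
      · simpa using NeZero.ne m
      · simp [hk]

variable {q : Option Q} {k : K} {m a : ℕ} [NeZero m] {u : Option K → ℤ}

theorem stackProgression_none :
    stackProgression q k m a u none = (radix Q : ℤ) * u none + digit q :=
  rfl

theorem stackProgression_some_self :
    stackProgression q k m a u (some k) = (m : ℤ) * u (some k) + a := by
  simp [stackProgression]

theorem stackProgression_some_of_ne {k' : K} (hk : k' ≠ k) :
    stackProgression q k m a u (some k') = u (some k') := by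
  simp [stackProgression, hk]

theorem stackProgression_encodeConfig {T : K → List Γ} {l : List Γ}
    (hl : encodeWord l = m * encodeWord (T k) + a) :
    stackProgression q k m a (encodeConfig ((none : Option Q), T)) =
      encodeConfig (q, Function.update T k l) := by
  ext (_ | k')
  · simp [stackProgression, encodeConfig, digit]
  · obtain rfl | hk := eq_or_ne k' k
    · simp only [stackProgression_some_self, encodeConfig, Function.update_self, hl]
      push_cast
      rfl
    · simp only [stackProgression_some_of_ne hk, encodeConfig, Function.update_of_ne hk]

/-- The affine moves incrementing a coordinate `some k`; together they empty the stacks in the final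
state. -/
noncomputable def cleanupMove (Q : Type*) [Finite Q] (k : K) : AffineMove (Option K) where
  source := stackProgression (none : Option Q) k 1 0
  target := stackProgression (none : Option Q) k 1 1

theorem radix_dvd_of_affineStep_cleanupMove {z z' : Option K → ℤ}
    (h : AffineStep (cleanupMove Q) z z') : (radix Q : ℤ) ∣ z none ∧ (radix Q : ℤ) ∣ z' none := by
  obtain ⟨k, u, rfl, rfl⟩ := h
  constructor <;> exact (dvd_mul_right _ _).add (dvd_zero _)

theorem affineStep_cleanupMove {z : Option K → ℤ} (hz : z none = 0) (k : K) :
    AffineStep (cleanupMove Q) z (z + Pi.single (some k) 1) := by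
  refine ⟨k, z, ?_, ?_⟩ <;> ext (_ | k')
  · simp [cleanupMove, stackProgression, hz, digit]
  · simp [cleanupMove, stackProgression]
  · simp [cleanupMove, stackProgression, hz, digit]
  · obtain rfl | hk := eq_or_ne k' k
    · simp [cleanupMove, stackProgression]
    · simp [cleanupMove, stackProgression, hk]

theorem eqvGen_cleanupMove_add_single {z : Option K → ℤ} (hz : z none = 0) (k : K) (n : ℕ) :
    Relation.EqvGen (AffineStep (cleanupMove Q)) z (z + Pi.single (some k) (n : ℤ)) := by
  induction n with
  | zero => simpa using Relation.EqvGen.refl z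
  | succ n ih =>
    rw [Nat.cast_succ, Pi.single_add, ← add_assoc]
    exact ih.trans _ _ _ (.rel _ _ (affineStep_cleanupMove (by simp [hz]) k))

theorem eqvGen_cleanupMove_encodeConfig_none [Finite K] (T : K → List Γ) :
    Relation.EqvGen (AffineStep (cleanupMove Q)) 0 (encodeConfig ((none : Option Q), T)) := by
  have := Fintype.ofFinite K
  have hsum : ∀ s : Finset K, Relation.EqvGen (AffineStep (cleanupMove Q)) 0
      (∑ k ∈ s, Pi.single (some k) (encodeWord (T k) : ℤ)) := by
    intro s
    induction s using Finset.induction_on with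
    | empty => simpa using Relation.EqvGen.refl _
    | insert k s hk ih =>
      rw [Finset.sum_insert hk, add_comm]
      exact ih.trans _ _ _ (eqvGen_cleanupMove_add_single (by simp) k _)
  convert hsum Finset.univ using 1
  ext (_ | k)
  · simp [encodeConfig, digit]
  · simp [encodeConfig, Finset.sum_apply, Pi.single_apply]

end Encoding

variable [DecidableEq K] (A : StackMachine Q K Γ)

/-- The configuration that follows the state `q` and the stacks `T`. -/
def next (q : Q) (T : K → List Γ) : Option Q × (K → List Γ) :=
  ((A.act q (T (A.key q)).head?).1,
    Function.update T (A.key q) ((A.act q (T (A.key q)).head?).2 ++ (T (A.key q)).tail))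

/-- The transition function of a stack machine, in the form used for Turing machines. -/
def step (c : Option Q × (K → List Γ)) : Option (Option Q × (K → List Γ)) :=
  c.1.map fun q => A.next q c.2

theorem step_eq_none_iff {c : Option Q × (K → List Γ)} : A.step c = none ↔ c.1 = none :=
  Option.map_eq_none_iff

section Simulation

variable [Finite Q] [Finite Γ]

/-- The affine move simulating the transition from the state `q` when the stack `key q` has top
symbol `h`. -/
noncomputable def transitionMove (qh : Q × Option Γ) : AffineMove (Option K) where
  source := stackProgression (some qh.1) (A.key qh.1) (radix Γ) (digit qh.2)
  target := stackProgression (A.act qh.1 qh.2).1 (A.key qh.1)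
    (radix Γ ^ (A.act qh.1 qh.2).2.length) (encodeWord (A.act qh.1 qh.2).2)

/-- The affine moves simulating a stack machine. -/
noncomputable def moves : Q × Option Γ ⊕ K → AffineMove (Option K) :=
  Sum.elim A.transitionMove (cleanupMove Q)

variable {A}

theorem affineStep_encodeConfig {c c' : Option Q × (K → List Γ)} (h : c' ∈ A.step c) :
    AffineStep A.transitionMove (encodeConfig c) (encodeConfig c') := by
  obtain ⟨_ | q, T⟩ := c
  · cases h
  obtain rfl : A.next q T = c' := Option.some_injective _ h
  refine ⟨(q, (T (A.key q)).head?),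
    encodeConfig ((none : Option Q), Function.update T (A.key q) (T (A.key q)).tail), ?_, ?_⟩
  · refine .trans ?_ (stackProgression_encodeConfig (l := T (A.key q)) ?_).symm
    · rw [Function.update_idem, Function.update_eq_self]
    · rw [Function.update_self, encodeWord_eq]
  · refine .trans ?_ (stackProgression_encodeConfig
      (l := (A.act q (T (A.key q)).head?).2 ++ (T (A.key q)).tail) ?_).symm
    · rw [Function.update_idem, next]
    · rw [Function.update_self, encodeWord_append]

theorem rightUnique_affineStep_transitionMove :
    Relator.RightUnique (AffineStep A.transitionMove) := by
  rintro _ _ _ ⟨⟨q, h⟩, u, rfl, rfl⟩ ⟨⟨q', h'⟩, u', he, rfl⟩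
  have hq := eq_of_mul_add_eq_mul_add (digit_lt _) (digit_lt _) (congrFun he none)
  obtain rfl : q = q' := Option.some_injective _ (digit_injective hq)
  have hkey := congrFun he (some (A.key q))
  simp only [transitionMove, stackProgression_some_self] at hkey
  obtain rfl := digit_injective (eq_of_mul_add_eq_mul_add (digit_lt _) (digit_lt _) hkey)
  obtain rfl : u = u' := funext fun j =>
    mul_left_cancel₀ ((A.transitionMove (q, h)).source.step_ne_zero j)
      (congrFun (add_right_cancel he) j)
  rfl

theorem not_radix_dvd_of_affineStep_transitionMove {z z' : Option K → ℤ}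
    (h : AffineStep A.transitionMove z z') : ¬ (radix Q : ℤ) ∣ z none := by
  obtain ⟨⟨q, h⟩, u, rfl, -⟩ := h
  rw [transitionMove, stackProgression_none, Int.dvd_add_right (dvd_mul_right _ _),
    Int.natCast_dvd_natCast, radix_dvd_digit]
  exact Option.some_ne_none q

theorem exists_reaches_of_reflTransGen {c : Option Q × (K → List Γ)} {z : Option K → ℤ}
    (h : Relation.ReflTransGen (AffineStep A.transitionMove) (encodeConfig c) z) :
    ∃ c', StateTransition.Reaches A.step c c' ∧ encodeConfig c' = z := by
  induction h with
  | refl => exact ⟨c, .refl, rfl⟩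
  | tail _ hstep ih =>
    obtain ⟨⟨_ | q, T⟩, hc, rfl⟩ := ih
    · exact absurd (radix_dvd_encodeConfig_none.2 rfl)
        (not_radix_dvd_of_affineStep_transitionMove hstep)
    · have hnext : A.next q T ∈ A.step (some q, T) := rfl
      exact ⟨_, hc.tail hnext,
        rightUnique_affineStep_transitionMove (affineStep_encodeConfig hnext) hstep⟩

theorem eval_dom_of_eqvGen_moves {c : Option Q × (K → List Γ)}
    (h : Relation.EqvGen (AffineStep A.moves) (encodeConfig c) 0) :
    (StateTransition.eval A.step c).Dom := by
  obtain ⟨_, hz, hcz⟩ := exists_reflTransGen_of_eqvGen (Z := {z | (radix Q : ℤ) ∣ z none})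
    rightUnique_affineStep_transitionMove
    (fun _ _ => not_radix_dvd_of_affineStep_transitionMove)
    (fun _ _ hs => (affineStep_sumElim.1 hs).imp_right radix_dvd_of_affineStep_cleanupMove)
    h (dvd_zero _)
  obtain ⟨c', hc, rfl⟩ := exists_reaches_of_reflTransGen hcz
  exact Part.dom_iff_mem.2 ⟨c', StateTransition.mem_eval.2
    ⟨hc, A.step_eq_none_iff.2 (radix_dvd_encodeConfig_none.1 hz)⟩⟩

theorem eqvGen_moves_of_eval_dom [Finite K] {c : Option Q × (K → List Γ)}
    (h : (StateTransition.eval A.step c).Dom) :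
    Relation.EqvGen (AffineStep A.moves) (encodeConfig c) 0 := by
  obtain ⟨⟨q, T⟩, hc'⟩ := Part.dom_iff_mem.1 h
  obtain ⟨hc, hfinal⟩ := StateTransition.mem_eval.1 hc'
  obtain rfl : q = none := A.step_eq_none_iff.1 hfinal
  refine .trans _ _ _ (Relation.EqvGen.reflTransGen_le_eqvGen _ _ _ (hc.lift encodeConfig ?_))
    (.symm _ _ ((eqvGen_cleanupMove_encodeConfig_none T).mono ?_))
  · exact fun _ _ hstep => affineStep_sumElim.2 (.inl (affineStep_encodeConfig hstep))
  · exact fun _ _ hstep => affineStep_sumElim.2 (.inr hstep)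

theorem eqvGen_moves_iff_eval_dom [Finite K] {c : Option Q × (K → List Γ)} :
    Relation.EqvGen (AffineStep A.moves) (encodeConfig c) 0 ↔
      (StateTransition.eval A.step c).Dom :=
  ⟨eval_dom_of_eqvGen_moves, eqvGen_moves_of_eval_dom⟩

end Simulation

end StackMachine

end StackMachine

section TM2

open Turing StateTransition

namespace StackMachine

section Restrict

variable {Q K Γ : Type*} (A : StackMachine Q K Γ)

/-- The transitions from states in `F` do not lead out of `F`. -/
def IsInvariant (F : Set Q) : Prop :=
  ∀ q ∈ F, ∀ h, ∀ q' ∈ (A.act q h).1, q' ∈ F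

open Classical in
/-- The machine with states in `F`; it is meant for an invariant set `F`, the transitions out of `F`
being replaced by transitions into the final state. -/
noncomputable def restrict (F : Set Q) : StackMachine F K Γ where
  key q := A.key q
  act q h := ((A.act q h).1.bind fun q' => if hq' : q' ∈ F then some ⟨q', hq'⟩ else none,
    (A.act q h).2)

variable {A} [DecidableEq K] {F : Set Q}

theorem map_next_restrict (hF : A.IsInvariant F) (q : F) (T : K → List Γ) :
    ((A.restrict F).next q T).map (Option.map (↑)) id = A.next q T := by
  refine Prod.ext ?_ rfl
  cases hq : (A.act q (T (A.key q)).head?).1 with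
  | none => simp [next, restrict, hq]
  | some q' => simp [next, restrict, hq, hF q q.2 _ q' hq]

theorem eval_restrict_dom_iff (hF : A.IsInvariant F) (c : Option F × (K → List Γ)) :
    (eval (A.restrict F).step c).Dom ↔ (eval A.step (c.map (Option.map (↑)) id)).Dom := by
  refine (tr_eval_dom (tr := fun c c' => Prod.map (Option.map (↑)) id c = c') ?_ rfl).symm
  rintro ⟨_ | q, T⟩ _ rfl
  · rfl
  · exact ⟨_, map_next_restrict hF q T, .single rfl⟩

end Restrict

variable {K Γ Λ σ : Type*} (M : Λ → TM2.Stmt (fun _ : K => Γ) Λ σ)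

/-- The effect of the first instruction of a statement on the state and on the top symbol of the
stack `stmtKey k₀ s`. -/
def stmtAct : TM2.Stmt (fun _ : K => Γ) Λ σ → σ → Option Γ →
    Option (TM2.Stmt (fun _ : K => Γ) Λ σ × σ) × List Γ
  | .push _ f s, v, h => (some (s, v), f v :: h.toList)
  | .peek _ f s, v, h => (some (s, f v h), h.toList)
  | .pop _ f s, v, h => (some (s, f v h), [])
  | .load f s, v, h => (some (s, f v), h.toList)
  | .branch f s₁ s₂, v, h => (some (cond (f v) s₁ s₂, v), h.toList)
  | .goto l, v, h => (some (M (l v), v), h.toList)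
  | .halt, _, h => (none, h.toList)

/-- The stack used by the first instruction of a statement, or `k₀` if there is none. -/
def stmtKey (k₀ : K) : TM2.Stmt (fun _ : K => Γ) Λ σ → K
  | .push k _ _ => k
  | .peek k _ _ => k
  | .pop k _ _ => k
  | _ => k₀

/-- The stack machine whose states are the statements of a `TM2` machine, together with the values
of its internal variable. -/
def ofTM2 (k₀ : K) : StackMachine (TM2.Stmt (fun _ : K => Γ) Λ σ × σ) K Γ where
  key q := stmtKey k₀ q.1
  act q h := stmtAct M q.1 q.2 h

/-- The states of `ofTM2` whose statement occurs in the code of a label in `S`. -/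
def statesOfLabels (S : Finset Λ) : Set (TM2.Stmt (fun _ : K => Γ) Λ σ × σ) :=
  {q | ∃ l ∈ S, q.1 ∈ TM2.stmts₁ (M l)}

theorem finite_statesOfLabels [Finite σ] (S : Finset Λ) : (statesOfLabels M S).Finite :=
  ((S.finite_toSet.biUnion fun _ _ => (TM2.stmts₁ _).finite_toSet).prod
    Set.finite_univ).subset fun _ ⟨_, hl, hs⟩ => ⟨Set.mem_biUnion hl hs, trivial⟩

theorem isInvariant_statesOfLabels (k₀ : K) {S : Finset Λ}
    (hS : ∀ l ∈ S, TM2.SupportsStmt S (M l)) :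
    (ofTM2 M k₀).IsInvariant (statesOfLabels M S) := by
  rintro ⟨s, v⟩ ⟨l, hl, hs⟩ h q' hq'
  have hsub : ∀ s' ∈ TM2.stmts₁ s, s' ∈ TM2.stmts₁ (M l) := fun _ hs' =>
    TM2.stmts₁_trans hs hs'
  cases s with
  | goto f =>
    obtain rfl := Option.some_injective _ hq'
    exact ⟨f v, TM2.stmts₁_supportsStmt_mono hs (hS l hl) v, TM2.stmts₁_self⟩
  | halt => cases hq'
  | branch f s₁ s₂ =>
    obtain rfl := Option.some_injective _ hq'
    refine ⟨l, hl, hsub _ ?_⟩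
    cases f v <;> simp [TM2.stmts₁, TM2.stmts₁_self]
  | _ =>
    obtain rfl := Option.some_injective _ hq'
    exact ⟨l, hl, hsub _ (by simp [TM2.stmts₁, TM2.stmts₁_self])⟩

/-- The configuration of `ofTM2` corresponding to a configuration of a `TM2` machine. -/
def ofCfg (c : TM2.Cfg (fun _ : K => Γ) Λ σ) :
    Option (TM2.Stmt (fun _ : K => Γ) Λ σ × σ) × (K → List Γ) :=
  (c.l.map fun l => (M l, c.var), c.stk)

theorem head?_toList_append_tail {α : Type*} (l : List α) : l.head?.toList ++ l.tail = l := by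
  cases l <;> rfl

variable [DecidableEq K] (k₀ : K)

theorem reaches₁_ofCfg_stepAux (s : TM2.Stmt (fun _ : K => Γ) Λ σ) (v : σ) (T : K → List Γ) :
    Reaches₁ (ofTM2 M k₀).step (some (s, v), T) (ofCfg M (TM2.stepAux s v T)) := by
  have hnext : ∀ (s : TM2.Stmt (fun _ : K => Γ) Λ σ) (v : σ) (T : K → List Γ),
      Reaches₁ (ofTM2 M k₀).step (some (s, v), T) ((stmtAct M s v (T (stmtKey k₀ s)).head?).1,
        Function.update T (stmtKey k₀ s)
          ((stmtAct M s v (T (stmtKey k₀ s)).head?).2 ++ (T (stmtKey k₀ s)).tail)) :=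
    fun s v T => .single rfl
  induction s generalizing v T with
  | branch f s₁ s₂ ih₁ ih₂ =>
    refine (hnext _ v T).trans ?_
    cases hf : f v
    · simpa [stmtAct, stmtKey, head?_toList_append_tail, hf, Reaches₁] using ih₂ v T
    · simpa [stmtAct, stmtKey, head?_toList_append_tail, hf, Reaches₁] using ih₁ v T
  | goto f =>
    simpa [stmtAct, stmtKey, head?_toList_append_tail, ofCfg] using hnext (.goto f) v T
  | halt =>
    simpa [stmtAct, stmtKey, head?_toList_append_tail, ofCfg] using hnext .halt v T
  | push k f s ih | peek k f s ih | pop k f s ih | load f s ih =>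
    refine (hnext _ v T).trans ?_
    simpa [stmtAct, stmtKey, head?_toList_append_tail, Reaches₁] using ih _ _

theorem eval_ofTM2_dom_iff (c : TM2.Cfg (fun _ : K => Γ) Λ σ) :
    (eval (ofTM2 M k₀).step (ofCfg M c)).Dom ↔ (eval (TM2.step M) c).Dom := by
  refine tr_eval_dom (tr := fun c c' => ofCfg M c = c') ?_ rfl
  rintro ⟨_ | l, v, T⟩ _ rfl
  · rfl
  · exact ⟨_, rfl, reaches₁_ofCfg_stepAux M k₀ _ _ _⟩

end StackMachine

end TM2

section Undecidability

open Turing PartrecToTM2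

instance : Fintype K' :=
  ⟨{.main, .rev, .aux, .stack}, fun k => by cases k <;> simp⟩

theorem trNum_bit {m : Num} {b : Bool} (h : b = true ∨ m ≠ 0) :
    trNum (cond b Num.bit1 Num.bit0 m) = cond b Γ'.bit1 Γ'.bit0 :: trNum m := by
  cases b <;> cases m <;> first | rfl | exact absurd rfl (h.resolve_left Bool.false_ne_true)

theorem trNat_eq_cons {n : ℕ} (hn : n ≠ 0) :
    trNat n = cond n.bodd Γ'.bit1 Γ'.bit0 :: trNat n.div2 := by
  have h : n.bodd = true ∨ (n.div2 : Num) ≠ 0 := by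
    rw [or_iff_not_imp_left, Bool.not_eq_true]
    intro hodd
    have hdiv := Nat.bodd_add_div2 n
    rw [← Nat.cast_zero, Ne, Nat.cast_inj]
    rintro h0
    simp_all
  rw [trNat, trNat, ← trNum_bit h, ← Num.ofNat'_eq n.div2, ← Num.ofNat'_bit, Nat.bit_bodd_div2,
    Num.ofNat'_eq]

theorem encodeWord_trList_singleton {n : ℕ} (hn : n ≠ 0) :
    encodeWord (trList [n]) =
      cond n.bodd (digit (some Γ'.bit1)) (digit (some Γ'.bit0)) +
        radix Γ' * encodeWord (trList [n.div2]) := by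
  rw [trList, trNat_eq_cons hn, List.cons_append, encodeWord_cons, trList]
  cases n.bodd <;> rfl

theorem computable_encodeWord_trList : Computable fun n => encodeWord (trList [n]) := by
  have hrec : Primrec₂ fun (_ : Unit) (l : List ℕ) =>
      if l.length = 0 then some (encodeWord (trList [0])) else
        l[l.length.div2]?.map fun w =>
          cond l.length.bodd (digit (some Γ'.bit1)) (digit (some Γ'.bit0)) + radix Γ' * w := by
    have hlen : Primrec fun p : Unit × List ℕ => p.2.length := Primrec.list_length.comp .snd
    exact Primrec.ite (Primrec.eq.comp hlen (.const 0)) (.const _) <| Primrec.option_map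
      (Primrec.list_getElem?.comp .snd (Primrec.nat_div2.comp hlen)) <| Primrec.nat_add.comp
        (Primrec.cond (Primrec.nat_bodd.comp (hlen.comp .fst)) (.const _) (.const _))
        (Primrec.nat_mul.comp (.const _) .snd)
  refine ((Primrec.nat_strong_rec (fun _ n => encodeWord (trList [n])) hrec
    fun _ n => ?_).comp (.const ()) .id).to_comp
  obtain rfl | hn := eq_or_ne n 0
  · simp
  · have hlt : n.div2 < n := by rw [Nat.div2_val]; lia
    simp [hn, hlt, -trList, encodeWord_trList_singleton hn]

theorem exists_not_computablePred_eval_tr :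
    ∃ c : ToPartrec.Code, ¬ ComputablePred fun n =>
      (StateTransition.eval (TM2.step tr) (PartrecToTM2.init c [n])).Dom := by
  have hf : Partrec fun n => (Denumerable.ofNat Nat.Partrec.Code n).eval 0 :=
    Nat.Partrec.Code.eval_part.comp (Computable.ofNat _) (.const 0)
  obtain ⟨c, hc⟩ := ToPartrec.Code.exists_code (Nat.Partrec'.part_iff₁.2 hf)
  refine ⟨c, fun h => ComputablePred.halting_problem 0 ?_⟩
  refine ComputablePred.computable_of_manyOneReducible
    ⟨Encodable.encode, Computable.encode, fun d => ?_⟩ h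
  have hd := hc ⟨[Encodable.encode d], rfl⟩
  simp only [List.Vector.head, Denumerable.ofNat_encode] at hd
  rw [tr_eval]
  simp [hd]

theorem exists_stackMachine_not_computablePred :
    ∃ (Q : Type) (_ : Finite Q) (A : StackMachine Q K' Γ') (q : Option Q),
      ¬ ComputablePred fun n =>
        (StateTransition.eval A.step (q, K'.elim (trList [n]) [] [] [])).Dom := by
  obtain ⟨c, hc⟩ := exists_not_computablePred_eval_tr
  have hS := (tr_supports c .halt).2
  have hF := StackMachine.isInvariant_statesOfLabels tr .main hS
  have hstart : (tr (trNormal c .halt), none) ∈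
      StackMachine.statesOfLabels (σ := Option Γ') tr (codeSupp c .halt) :=
    ⟨_, (tr_supports c .halt).1, TM2.stmts₁_self⟩
  refine ⟨StackMachine.statesOfLabels tr (codeSupp c .halt),
    (StackMachine.finite_statesOfLabels tr _).to_subtype,
    (StackMachine.ofTM2 tr .main).restrict _, some ⟨_, hstart⟩, fun h => hc (h.of_eq fun n => ?_)⟩
  exact (StackMachine.eval_restrict_dom_iff hF _).trans
    (StackMachine.eval_ofTM2_dom_iff tr .main (PartrecToTM2.init c [n]))

theorem encodeConfig_main {Q : Type*} [Finite Q] (q : Option Q) (l : List Γ') :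
    StackMachine.encodeConfig (q, K'.elim l [] [] []) =
      Pi.single (some .main) (encodeWord l : ℤ) +
        StackMachine.encodeConfig (Γ := Γ') (q, fun _ => []) := by
  ext (_ | _ | _ | _ | _) <;> simp [StackMachine.encodeConfig, encodeWord]

theorem exists_not_computablePred_eqvGen :
    ∃ (ι κ : Type) (_ : Fintype ι) (_ : DecidableEq ι) (_ : Finite κ) (μ : κ → AffineMove ι)
      (j : ι) (v : ι → ℤ) (g : ℕ → ℕ), Computable g ∧ ¬ ComputablePred fun n =>
        Relation.EqvGen (AffineStep μ) (Pi.single j (g n : ℤ) + v) 0 := by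
  obtain ⟨Q, _, A, q, hA⟩ := exists_stackMachine_not_computablePred
  refine ⟨Option K', Q × Option Γ' ⊕ K', inferInstance, inferInstance, inferInstance, A.moves,
    some .main, StackMachine.encodeConfig (Γ := Γ') (q, fun _ => []), _,
    computable_encodeWord_trList, fun h => hA (h.of_eq fun n => ?_)⟩
  rw [← encodeConfig_main, StackMachine.eqvGen_moves_iff_eval_dom]

/-- The splitting of the indices of an `n × n` matrix used for `(a ⊗ b) ⊕ 1`; the pair `(0, 0)` is
the first index. -/
def cornerEquiv {n : ℕ} (hn : 4 ≤ n) : (Fin 2 × Fin 2) ⊕ Fin (n - 4) ≃ Fin n :=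
  (finProdFinEquiv.sumCongr (Equiv.refl _)).trans (finSumFinEquiv.trans (finCongr (by lia)))

end Undecidability

end CornerProblem

open CornerProblem in
theorem upper_left_corner_problem_undecidable_general (n : ℕ) (hn : 4 ≤ n) :
    ¬ ∃ f : List (Matrix (Fin n) (Fin n) ℚ) → Bool, Computable f ∧
      ∀ X : List (Matrix (Fin n) (Fin n) ℚ), (∀ M ∈ X, IsUnit M) →
        (f X = true ↔
          ∃ g ∈ Subgroup.closure
              {g : GL (Fin n) ℚ | (g : Matrix (Fin n) (Fin n) ℚ) ∈ X},
            (g : Matrix (Fin n) (Fin n) ℚ) ⟨0, by omega⟩ ⟨0, by omega⟩ = 0) := by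
  rintro ⟨f, hf, hspec⟩
  obtain ⟨ι, κ, _, _, _, μ, j, v, g, hg, hμ⟩ := exists_not_computablePred_eqvGen
  have := Fintype.ofFinite κ
  obtain ⟨X, hX, hcorner⟩ := exists_computable_generators (cornerEquiv hn)
    (finite_affineRelators μ v) (.x j) .y .z hg
  refine hμ (ComputablePred.computable_iff.2 ⟨fun k => f (X k), hf.comp hX, ?_⟩)
  funext k
  rw [hspec _ (hcorner k).1, ← of_z_mem_normalClosure_iff]
  exact propext (hcorner k).2.symm

/-- **Undecidability of the upper-left-corner problem for matrix groups.**
For `n ≥ 6`, there is no computable function that, given a finite list `X` of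
invertible `n × n` rational matrices, decides whether the subgroup of
`GL_n(ℚ)` generated by `X` contains a matrix whose `(1,1)`-entry is `0`. -/
theorem upper_left_corner_problem_undecidable (n : ℕ) (hn : 6 ≤ n) :
    ¬ ∃ f : List (Matrix (Fin n) (Fin n) ℚ) → Bool, Computable f ∧
      ∀ X : List (Matrix (Fin n) (Fin n) ℚ), (∀ M ∈ X, IsUnit M) →
        (f X = true ↔
          ∃ g ∈ Subgroup.closure
              {g : GL (Fin n) ℚ | (g : Matrix (Fin n) (Fin n) ℚ) ∈ X},
            (g : Matrix (Fin n) (Fin n) ℚ) ⟨0, by omega⟩ ⟨0, by omega⟩ = 0) := by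
  exact upper_left_corner_problem_undecidable_general n (by omega)
end

section
/- Let n ≥ 9. The upper-right-corner problem for matrix groups over ℚ is undecidable: there is no computable function which, given as input a finite list X of invertible n×n matrices with rational entries, decides whether the subgroup ⟨X⟩ of GL_n(ℚ) generated by X contains a non-identity matrix whose (1,n)-entry equals 0. -/
/-!
Halting of Turing machines reduces to halting of modular machines, which act on configurations
`(q, v)` with `v ∈ ℕ²` by affine maps chosen according to the residues of `v`. The group with
letters `x`, `y`, `k`, `t q`, `r q c a` and relations imitating the steps of such a machine makes
`k` commute with the conjugate of `t q` by `x ^ v₁ * y ^ v₂` whenever `(q, v)` halts, so the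
commutator `z` of `k` with the initial configuration is trivial if the machine halts. If it does not
halt, then a model in a wreath product of infinite dihedral groups shows that `z` even has infinite
order: there `t q` translates one fibre and `k` reflects exactly the fibres over non-halting
configurations.

The pairs of words that are equal in this group form a finitely generated subgroup `H` of `F × F`
for a free group `F` (Mihailova). By ping-pong there are representations `ρ₁`, `ρ₂` of `F` in
`SL₂(ℤ)` whose lower left entries vanish exactly on `⟨z⟩` and on `1`. The sum of the symmetric
squares of `ρ₁` and `ρ₂` has a conjugate in which any chosen off-diagonal entry is the sum of the
squares of these two entries, so on `H` it vanishes exactly on the `(z ^ i, 1)` with `z ^ i` trivial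
in the group: only on `1` if `z` has infinite order, but also on `(z, 1)` if `z` is trivial.
-/

section Encoding

open Encodable

theorem primrecRel_natCoprime : PrimrecRel Nat.Coprime := by
  have mod_eq_zero {f : ℕ × ℕ → ℕ} (hf : Primrec f) :
      PrimrecPred fun q : ℕ × ℕ => f q % q.1 = 0 :=
    Primrec.eq.comp (Primrec.nat_mod.comp hf Primrec.fst) (.const 0)
  have dvd_left : PrimrecPred fun q : ℕ × ℕ => q.2.unpair.1 % q.1 = 0 :=
    mod_eq_zero (Primrec.fst.comp (Primrec.unpair.comp Primrec.snd))
  have dvd_right : PrimrecPred fun q : ℕ × ℕ => q.2.unpair.2 % q.1 = 0 :=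
    mod_eq_zero (Primrec.snd.comp (Primrec.unpair.comp Primrec.snd))
  have eq_one : PrimrecPred fun q : ℕ × ℕ => q.1 = 1 := Primrec.eq.comp Primrec.fst (.const 1)
  have trivial_divisor : PrimrecRel fun d m : ℕ =>
      ¬(m.unpair.1 % d = 0 ∧ m.unpair.2 % d = 0) ∨ d = 1 :=
    (dvd_left.and dvd_right).not.or eq_one
  refine (trivial_divisor.forall_lt.comp (Primrec.nat_add.comp (Primrec.nat_add.comp
    Primrec.fst Primrec.snd) (.const 2)) Primrec₂.natPair).of_eq fun ⟨a, b⟩ => ?_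
  simp only [Nat.unpair_pair, ← Nat.dvd_iff_mod_eq_zero, ← imp_iff_not_or]
  refine ⟨fun h => h _ ?_ ⟨Nat.gcd_dvd_left a b, Nat.gcd_dvd_right a b⟩,
    fun h d _ hd => Nat.eq_one_of_dvd_coprimes h hd.1 hd.2⟩
  rcases Nat.eq_zero_or_pos a with rfl | ha
  · simp
  · have := Nat.gcd_le_left b ha
    omega

theorem natAbs_eq_encode_add_one_div_two (z : ℤ) : z.natAbs = (encode z + 1) / 2 := by
  rcases z with n | n
  · change n = (2 * n + 1) / 2; omega
  · change n + 1 = (2 * n + 1 + 1) / 2; omega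

theorem primrecPred_mem_range_encode_rat :
    PrimrecPred (fun m => m ∈ Set.range (@encode ℚ Rat.instEncodable)) := by
  have num : Primrec (fun m : ℕ => m.unpair.1) := Primrec.fst.comp Primrec.unpair
  have den : Primrec (fun m : ℕ => m.unpair.2) := Primrec.snd.comp Primrec.unpair
  have h : PrimrecPred (fun m : ℕ => m.unpair.2 ≠ 0 ∧
      Nat.Coprime ((m.unpair.1 + 1) / 2) m.unpair.2) :=
    (Primrec.eq.comp den (.const 0)).not.and (primrecRel_natCoprime.comp
      (Primrec.nat_div.comp (Primrec.nat_add.comp num (.const 1)) (.const 2)) den)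
  refine h.of_eq fun m => ⟨fun ⟨hden, hcop⟩ => ?_, ?_⟩
  · refine ⟨⟨Denumerable.ofNat ℤ m.unpair.1, m.unpair.2, hden, ?_⟩, ?_⟩
    · rwa [natAbs_eq_encode_add_one_div_two, Denumerable.encode_ofNat]
    · change Nat.pair (encode (Denumerable.ofNat ℤ m.unpair.1)) m.unpair.2 = m
      rw [Denumerable.encode_ofNat, Nat.pair_unpair]
  · rintro ⟨q, rfl⟩
    change (Nat.unpair (Nat.pair (encode q.num) q.den)).2 ≠ 0 ∧
      Nat.Coprime (((Nat.unpair (Nat.pair (encode q.num) q.den)).1 + 1) / 2)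
        (Nat.unpair (Nat.pair (encode q.num) q.den)).2
    rw [Nat.unpair_pair, ← natAbs_eq_encode_add_one_div_two]
    exact ⟨q.den_nz, q.reduced⟩

-- The `Denumerable` code of a rational counts the `Encodable` codes below its own.
theorem primrec_ratCast_int : Primrec (Int.cast : ℤ → ℚ) := by
  have : DecidablePred (fun m => m ∈ Set.range (@encode ℚ Rat.instEncodable)) :=
    Encodable.decidableRangeEncode ℚ
  have code_below : Primrec (fun z : ℤ => List.range (Nat.pair (encode z) 1)) :=
    Primrec.list_range.comp (Primrec₂.natPair.comp Primrec.encode (.const 1))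
  refine Primrec.encode_iff.1 ((Primrec.list_length.comp
    ((Primrec.listFilter primrecPred_mem_range_encode_rat).comp code_below)).of_eq fun z => ?_)
  rw [← List.countP_eq_length_filter]
  change _ = (List.range (Nat.pair (encode z) 1)).countP _
  congr!

theorem primrec₂_natCast_sub_natCast : Primrec₂ (fun a b : ℕ => (a : ℤ) - (b : ℤ)) := by
  have h : Primrec₂ (fun a b : ℕ => if a < b then 2 * (b - a - 1) + 1 else 2 * (a - b)) :=
    Primrec.ite (Primrec.nat_lt.comp Primrec.fst Primrec.snd)
      (Primrec.succ.comp (Primrec.nat_mul.comp (.const 2) (Primrec.nat_sub.comp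
        (Primrec.nat_sub.comp Primrec.snd Primrec.fst) (.const 1))))
      (Primrec.nat_mul.comp (.const 2) (Primrec.nat_sub.comp Primrec.fst Primrec.snd))
  refine Primrec.encode_iff.1 (Primrec.of_eq h fun ⟨a, b⟩ => ?_)
  dsimp only
  split_ifs with hab
  · obtain ⟨c, rfl⟩ := Nat.exists_eq_add_of_lt hab
    rw [show (a : ℤ) - ((a + c + 1 : ℕ) : ℤ) = Int.negSucc c by omega]
    change _ = 2 * c + 1
    omega
  · obtain ⟨c, rfl⟩ := Nat.exists_eq_add_of_le (not_lt.1 hab)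
    rw [show ((b + c : ℕ) : ℤ) - (b : ℤ) = Int.ofNat c by simp]
    change _ = 2 * c
    omega

theorem primrec_toNat : Primrec Int.toNat := by
  have h : Primrec (fun z : ℤ => if encode z % 2 = 0 then encode z / 2 else 0) :=
    Primrec.ite (Primrec.eq.comp (Primrec.nat_mod.comp Primrec.encode (.const 2)) (.const 0))
      (Primrec.nat_div.comp Primrec.encode (.const 2)) (.const 0)
  refine h.of_eq fun z => ?_
  rcases z with n | n
  · change (if 2 * n % 2 = 0 then 2 * n / 2 else 0) = n
    simp
  · change (if (2 * n + 1) % 2 = 0 then (2 * n + 1) / 2 else 0) = 0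
    simp [Nat.add_mod]

theorem primrec_int_neg : Primrec (fun z : ℤ => -z) := by
  have natAbs : Primrec Int.natAbs :=
    (Primrec.nat_div.comp (Primrec.succ.comp Primrec.encode) (.const 2)).of_eq fun z =>
      (natAbs_eq_encode_add_one_div_two z).symm
  refine (primrec₂_natCast_sub_natCast.comp natAbs
    (Primrec.nat_mul.comp (.const 2) primrec_toNat)).of_eq fun z => ?_
  rw [Nat.cast_mul]
  omega

theorem primrec₂_int_add : Primrec₂ (fun a b : ℤ => a + b) := by
  have neg_toNat := primrec_toNat.comp primrec_int_neg
  refine (primrec₂_natCast_sub_natCast.comp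
    (Primrec.nat_add.comp (primrec_toNat.comp .fst) (primrec_toNat.comp .snd))
    (Primrec.nat_add.comp (neg_toNat.comp .fst) (neg_toNat.comp .snd))).of_eq fun ⟨a, b⟩ => ?_
  push_cast
  omega

theorem primrec₂_int_mul : Primrec₂ (fun a b : ℤ => a * b) := by
  have neg_toNat := primrec_toNat.comp primrec_int_neg
  refine (primrec₂_natCast_sub_natCast.comp
    (Primrec.nat_add.comp (Primrec.nat_mul.comp (primrec_toNat.comp .fst) (primrec_toNat.comp .snd))
      (Primrec.nat_mul.comp (neg_toNat.comp .fst) (neg_toNat.comp .snd)))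
    (Primrec.nat_add.comp (Primrec.nat_mul.comp (primrec_toNat.comp .fst) (neg_toNat.comp .snd))
      (Primrec.nat_mul.comp (neg_toNat.comp .fst) (primrec_toNat.comp .snd)))).of_eq
    fun ⟨a, b⟩ => ?_
  have toNat_sub (z : ℤ) : z = z.toNat - (-z).toNat := by omega
  conv_rhs => rw [toNat_sub a, toNat_sub b]
  push_cast
  ring

theorem primrec_int_sum {α ι : Type*} [Primcodable α] (s : Finset ι) {f : ι → α → ℤ}
    (hf : ∀ i ∈ s, Primrec (f i)) : Primrec (fun a => ∑ i ∈ s, f i a) := by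
  classical
  induction s using Finset.induction_on with
  | empty => simpa using Primrec.const 0
  | insert i s hi ih =>
    simp only [Finset.sum_insert hi]
    exact primrec₂_int_add.comp (hf i (s.mem_insert_self i))
      (ih fun k hk => hf k (Finset.mem_insert_of_mem hk))

theorem primrec_finArrow_finArrow {α σ : Type*} [Primcodable α] [Primcodable σ] {m n : ℕ}
    {f : α → Fin m → Fin n → σ} (hf : ∀ i j, Primrec fun a => f a i j) : Primrec f :=
  Primrec.fin_curry.2 <| Primrec₂.swap <| Primrec.fin_curry₁.2 fun i =>
    Primrec.fin_curry.2 <| Primrec₂.swap <| Primrec.fin_curry₁.2 fun j => hf i j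

theorem primrec_pow_mul_map_ratCast {n : ℕ} (A B : Matrix (Fin n) (Fin n) ℤ) :
    Primrec (fun N : ℕ => (A ^ N * B).map (Int.cast : ℤ → ℚ)) := by
  have entry (i j : Fin n) : Primrec fun M : Fin n → Fin n → ℤ => M i j :=
    Primrec.fin_app.comp (Primrec.fin_app.comp .id (.const i)) (.const j)
  have mul_left : Primrec fun (M : Fin n → Fin n → ℤ) i j => ∑ k, A i k * M k j :=
    primrec_finArrow_finArrow fun i j => primrec_int_sum _ fun k _ =>
      primrec₂_int_mul.comp (.const (A i k)) (entry k j)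
  have iterate : Primrec fun (N : ℕ) i j => (A ^ N * B) i j := by
    refine (Primrec.nat_rec₁ (fun i j => B i j) (mul_left.comp₂ Primrec₂.right)).of_eq fun N => ?_
    induction N with
    | zero => simp
    | succ N ih =>
      dsimp only
      rw [ih, pow_succ', mul_assoc]
      rfl
  exact primrec_finArrow_finArrow fun i j => primrec_ratCast_int.comp ((entry i j).comp iterate)

end Encoding

section TuringMachines

open Encodable Turing

theorem trNat_two_pow (j : ℕ) : PartrecToTM2.trNat (2 ^ j) = List.replicate j .bit0 ++ [.bit1] := by
  induction j with
  | zero => rfl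
  | succ j ih =>
    have trNum_bit0 {a : Num} (ha : a ≠ 0) :
        PartrecToTM2.trNum (Num.bit0 a) = .bit0 :: PartrecToTM2.trNum a := by
      cases a with
      | zero => exact absurd rfl ha
      | pos a => rfl
    have cast_succ : ((2 ^ (j + 1) : ℕ) : Num) = Num.bit0 ((2 ^ j : ℕ) : Num) := by
      rw [pow_succ, mul_comm, ← Num.ofNat'_eq, ← Num.ofNat'_eq]
      exact Num.ofNat'_bit false _
    have cast_ne_zero : ((2 ^ j : ℕ) : Num) ≠ 0 := fun h => by
      have := congrArg (fun a : Num => (a : ℕ)) h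
      rw [Num.to_of_nat] at this
      exact pow_ne_zero j two_ne_zero this
    rw [PartrecToTM2.trNat, cast_succ, trNum_bit0 cast_ne_zero, List.replicate_succ,
      List.cons_append, ← ih, PartrecToTM2.trNat]

theorem primrec_two_pow : Primrec (fun j : ℕ => 2 ^ j) := by
  refine (Primrec.nat_rec₁ 1
    (Primrec.nat_mul.comp₂ Primrec₂.right (Primrec₂.const 2))).of_eq fun j => ?_
  induction j with
  | zero => rfl
  | succ j ih => rw [pow_succ, ← ih]

theorem exists_partrec_not_computablePred_dom_two_pow :
    ∃ g : ℕ →. ℕ, Partrec g ∧ ¬ ComputablePred fun j : ℕ => (g (2 ^ j)).Dom := by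
  let log : ℕ →. ℕ := fun n => Nat.rfind fun j => Part.some (decide (2 ^ j = n))
  have hlog : Partrec log := Partrec.rfind <| Computable.partrec <| Primrec.to_comp <|
    Primrec.eq.decide.comp (primrec_two_pow.comp Primrec.snd) Primrec.fst
  have log_two_pow (j : ℕ) : log (2 ^ j) = Part.some j := by
    refine Part.eq_some_iff.2 (Nat.mem_rfind.2 ⟨by simp, fun {i} hi => ?_⟩)
    simp [((Nat.pow_lt_pow_iff_right one_lt_two).2 hi).ne]
  let run : ℕ →. ℕ := fun j => Nat.Partrec.Code.eval (Denumerable.ofNat Nat.Partrec.Code j) 0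
  have hrun : Partrec run :=
    Nat.Partrec.Code.eval_part.comp (Computable.ofNat _) (Computable.const 0)
  refine ⟨fun n => (log n).bind run, hlog.bind (hrun.comp Computable.snd), fun h => ?_⟩
  obtain ⟨f, hf, hfe⟩ := ComputablePred.computable_iff.1 h
  refine ComputablePred.halting_problem 0
    (ComputablePred.computable_iff.2 ⟨_, hf.comp Computable.encode, funext fun c => ?_⟩)
  rw [← congrFun hfe (encode c)]
  simp [log_two_pow, run]

instance : Fintype PartrecToTM2.K' :=
  ⟨{.main, .rev, .aux, .stack}, by rintro (_ | _ | _ | _) <;> simp⟩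

/-- The tape alphabet of the one-tape machines simulating Mathlib's evaluator of partial recursive
functions. -/
abbrev EvalSymbol : Type := TM2to1.Γ' PartrecToTM2.K' fun _ => PartrecToTM2.Γ'

theorem exists_TM0_eval_dom_iff {g : ℕ →. ℕ} (hg : Partrec g) :
    ∃ (Λ : Type) (_ : Inhabited Λ) (M : TM0.Machine EvalSymbol Λ) (S : Finset Λ),
      TM0.Supports M S ∧
      ∀ n, (TM0.eval M (TM2to1.trInit .main (PartrecToTM2.trList [n]))).Dom ↔ (g n).Dom := by
  obtain ⟨c, hc⟩ := ToPartrec.Code.exists_code (Nat.Partrec'.part_iff₁.2 hg)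
  let : Inhabited PartrecToTM2.Λ' := ⟨PartrecToTM2.trNormal c .halt⟩
  let M₂ : PartrecToTM2.Λ' → TM2.Stmt (fun _ : PartrecToTM2.K' => PartrecToTM2.Γ')
    PartrecToTM2.Λ' (Option PartrecToTM2.Γ') := PartrecToTM2.tr
  have hS : TM2.Supports M₂ (PartrecToTM2.codeSupp c .halt) := PartrecToTM2.tr_supports c _
  refine ⟨_, inferInstance, TM1to0.tr (TM2to1.tr M₂), _,
    TM1to0.tr_supports _ (TM2to1.tr_supports _ hS), fun n => ?_⟩
  have init_eq : (TM2.init .main (PartrecToTM2.trList [n]) : PartrecToTM2.Cfg') =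
      PartrecToTM2.init c [n] := by
    simp only [TM2.init, PartrecToTM2.init]
    congr 1
    funext k
    cases k <;> rfl
  rw [TM1to0.tr_eval, TM2to1.tr_eval_dom]
  change (StateTransition.eval (TM2.step M₂) (TM2.init .main _)).Dom ↔ _
  have code_eval : (c.eval [n]).Dom ↔ (g n).Dom := by
    rw [show c.eval [n] = _ from hc (n ::ᵥ List.Vector.nil)]
    rfl
  rw [init_eq, ← code_eval]
  erw [PartrecToTM2.tr_eval]
  rfl

/-- The tape symbol carrying `a` on the main stack and nothing on the others; `bottom` marks the
cell at the bottom of the stacks. -/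
def mainSymbol (bottom : Bool) (a : PartrecToTM2.Γ') : EvalSymbol :=
  (bottom, Function.update (fun _ => none) PartrecToTM2.K'.main (some a))

theorem trInit_trList_two_pow (j : ℕ) :
    (TM2to1.trInit .main (PartrecToTM2.trList [2 ^ j]) : List EvalSymbol) =
      mainSymbol true .cons :: mainSymbol false .bit1 ::
        List.replicate j (mainSymbol false .bit0) := by
  have hrev : (PartrecToTM2.trList [2 ^ j]).reverse = .cons :: .bit1 :: List.replicate j .bit0 := by
    simp [trNat_two_pow]
  rw [TM2to1.trInit, hrev, ← List.map_replicate]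
  rfl

theorem exists_injective_fin_apply_default_eq_zero (α : Type*) [Inhabited α] [Finite α] :
    ∃ f : α → Fin (Nat.card α + 1), Function.Injective f ∧ f default = 0 := by
  classical
  let e := Finite.equivFin α
  refine ⟨fun a => if a = default then 0 else (e a).succ, fun a b hab => ?_, if_pos rfl⟩
  by_cases ha : a = default <;> by_cases hb : b = default <;>
    simp_all [Fin.succ_ne_zero, (Fin.succ_ne_zero _).symm]

theorem exists_TM0_fin_eval_dom_iff {Γ Λ : Type} [Inhabited Γ] [Finite Γ] [Inhabited Λ]
    {M : TM0.Machine Γ Λ} {S : Finset Λ} (hS : TM0.Supports M S) :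
    ∃ (m : ℕ) (_ : NeZero m) (Λ' : Type) (_ : Inhabited Λ') (_ : Finite Λ')
      (f : Γ → Fin m) (M' : TM0.Machine (Fin m) Λ'),
      1 < m ∧ ∀ l, (TM0.eval M' (l.map f)).Dom ↔ (TM0.eval M l).Dom := by
  obtain ⟨f, hf_inj, hf_default⟩ := exists_injective_fin_apply_default_eq_zero Γ
  let symbol : PointedMap Γ (Fin (Nat.card Γ + 1)) := ⟨f, hf_default⟩
  let symbolInv : PointedMap (Fin (Nat.card Γ + 1)) Γ :=
    ⟨Function.invFun f, (congrArg (Function.invFun f) hf_default.symm).trans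
      (Function.leftInverse_invFun hf_inj default)⟩
  let : Inhabited S := ⟨⟨default, hS.1⟩⟩
  let state : PointedMap Λ S := ⟨Function.invFun Subtype.val,
    Function.leftInverse_invFun Subtype.val_injective (default : S)⟩
  refine ⟨_, inferInstance, S, inferInstance, inferInstance, f,
    M.map symbol symbolInv state Subtype.val, Nat.succ_lt_succ Nat.card_pos, fun l => ?_⟩
  have hrespects := M.map_respects symbol symbolInv state (Subtype.val : S → Λ) hS
    (Function.leftInverse_invFun hf_inj)
    (fun q hq => Function.invFun_eq (f := Subtype.val) ⟨(⟨q, hq⟩ : S), rfl⟩)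
  exact StateTransition.tr_eval_dom hrespects ⟨hS.1, TM0.map_init symbol state l⟩

theorem exists_TM0_fin_not_computablePred_eval_dom :
    ∃ (m : ℕ) (_ : NeZero m) (Λ : Type) (_ : Inhabited Λ) (_ : Finite Λ)
      (M : TM0.Machine (Fin m) Λ) (u v w : Fin m), 1 < m ∧
      ¬ ComputablePred fun j : ℕ => (TM0.eval M (u :: v :: List.replicate j w)).Dom := by
  obtain ⟨g, hg, hundec⟩ := exists_partrec_not_computablePred_dom_two_pow
  obtain ⟨Λ, _, M, S, hS, hM⟩ := exists_TM0_eval_dom_iff hg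
  have : Finite EvalSymbol :=
    inferInstanceAs (Finite (Bool × (PartrecToTM2.K' → Option PartrecToTM2.Γ')))
  obtain ⟨m, hm₀, Λ', hΛ', _, f, M', hm, hM'⟩ := exists_TM0_fin_eval_dom_iff hS
  refine ⟨m, hm₀, Λ', hΛ', inferInstance, M', f (mainSymbol true .cons),
    f (mainSymbol false .bit1), f (mainSymbol false .bit0), hm,
    fun h => hundec (h.of_eq fun j => ?_)⟩
  rw [← hM, ← hM', trInit_trList_two_pow, List.map_cons, List.map_cons, List.map_replicate]

end TuringMachines

section ModularMachines

open Turing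

/-- The right-hand side of a rule of a modular machine: the new state, together with the affine map
`v ↦ offset + modulus * v` on pairs of natural numbers. -/
structure ModularTarget (Q : Type*) where
  state : Q
  offset : ℕ × ℕ
  modulus : ℕ × ℕ
  fst_lt : offset.1 < modulus.1
  snd_lt : offset.2 < modulus.2

/-- A total deterministic modular machine with states `Q` and base `m`. A configuration is a state
with a pair of natural numbers; the rule `P q c a` applies in state `q` to the pairs congruent to
`(c, a)` modulo `m`. -/
def ModularMachine (Q : Type*) (m : ℕ) : Type _ := Q → Fin m → Fin m → ModularTarget Q

namespace ModularMachine

variable {Q : Type*} {m : ℕ} [NeZero m]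

/-- One step of a modular machine, rewriting `(c, a) + m * v` to `offset + modulus * v`. -/
def step (P : ModularMachine Q m) (C : Q × ℕ × ℕ) : Q × ℕ × ℕ :=
  let rule := P C.1 (Fin.ofNat m C.2.1) (Fin.ofNat m C.2.2)
  (rule.state, rule.offset + rule.modulus * (C.2.1 / m, C.2.2 / m))

/-- The configuration `C` leads to the pair `(0, 0)` in state `halt`. -/
def Halts (P : ModularMachine Q m) (halt : Q) (C : Q × ℕ × ℕ) : Prop :=
  ∃ n, P.step^[n] C = (halt, 0)

theorem step_add_mul (P : ModularMachine Q m) (q : Q) (c a : Fin m) (v : ℕ × ℕ) :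
    P.step (q, (c + m * v.1, a + m * v.2)) =
      ((P q c a).state, (P q c a).offset + (P q c a).modulus * v) := by
  have digit (d : Fin m) (k : ℕ) : Fin.ofNat m (d + m * k) = d :=
    Fin.ext (by simp [Nat.mod_eq_of_lt d.2])
  have quotient (d : Fin m) (k : ℕ) : (d + m * k) / m = k := by
    rw [Nat.add_mul_div_left _ _ (NeZero.pos m), Nat.div_eq_of_lt d.2, zero_add]
  simp only [step, digit, quotient]

theorem halts_step_iff {P : ModularMachine Q m} {halt : Q} (hfix : P.step (halt, 0) = (halt, 0))
    (C : Q × ℕ × ℕ) : P.Halts halt (P.step C) ↔ P.Halts halt C := by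
  constructor
  · rintro ⟨n, hn⟩
    exact ⟨n + 1, hn⟩
  · rintro ⟨n, hn⟩
    refine ⟨n, ?_⟩
    rw [← Function.iterate_succ_apply, Function.iterate_succ_apply', hn, hfix]

/-- The tape half whose cells, from the head outwards, are the base-`m` digits of `n`. -/
def digitTape (m : ℕ) [NeZero m] (n : ℕ) : ListBlank (Fin m) :=
  ListBlank.mk ((Nat.digits m n).map (Fin.ofNat m))

theorem digitTape_zero : digitTape m 0 = ListBlank.mk [] := by
  simp [digitTape]

theorem digitTape_add_mul (hm : 1 < m) (a : Fin m) (k : ℕ) :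
    digitTape m (a + m * k) = (digitTape m k).cons a := by
  by_cases h : a = 0 ∧ k = 0
  · obtain ⟨rfl, rfl⟩ := h
    simp only [Fin.val_zero, mul_zero, add_zero, digitTape_zero, ListBlank.cons_mk]
    exact Quotient.sound' (Or.inl ⟨1, rfl⟩)
  · have hne : (a : ℕ) ≠ 0 ∨ k ≠ 0 := by
      rw [← Fin.val_eq_zero_iff] at h
      tauto
    rw [digitTape, Nat.digits_add m hm a k a.2 hne, List.map_cons, ← ListBlank.cons_mk,
      Fin.ofNat_val_eq_self]
    rfl

theorem digitTape_ofDigits (hm : 1 < m) (l : List (Fin m)) :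
    digitTape m (Nat.ofDigits m (l.map Fin.val)) = ListBlank.mk l := by
  induction l with
  | nil => exact digitTape_zero
  | cons a l ih =>
    rw [List.map_cons, Nat.ofDigits_cons, digitTape_add_mul hm, ih, ListBlank.cons_mk]

variable {Λ : Type*} [Inhabited Λ]

/-- The modular machine simulating a Turing machine with alphabet `Fin m`. In state `some s` the
pair consists of the numbers whose digits are the left half of the tape and the rest of the tape,
head included; state `none`, entered on halting, divides both numbers by `m` down to `0`. -/
def ofTM0 (M : TM0.Machine (Fin m) Λ) : ModularMachine (Option Λ) m
  | none, _, _ => ⟨none, (0, 0), (1, 1), one_pos, one_pos⟩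
  | some s, c, a =>
    match M s a with
    | none => ⟨none, (0, 0), (1, 1), one_pos, one_pos⟩
    | some (s', .write b) => ⟨some s', (c, b), (m, m), c.2, b.2⟩
    | some (s', .move .right) =>
      ⟨some s', (a + m * c, 0), (m * m, 1), by nlinarith [a.2, c.2], one_pos⟩
    | some (s', .move .left) =>
      ⟨some s', (0, c + m * a), (1, m * m), one_pos, by nlinarith [a.2, c.2]⟩

/-- The configuration of a Turing machine encoded by a pair of numbers. -/
def tm0Cfg (s : Λ) (v : ℕ × ℕ) : TM0.Cfg (Fin m) Λ :=
  ⟨s, Tape.mk' (digitTape m v.1) (digitTape m v.2)⟩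

theorem map_tm0Cfg_step_ofTM0 (hm : 1 < m) (M : TM0.Machine (Fin m) Λ) (s : Λ) (v : ℕ × ℕ) :
    ((ofTM0 M).step (some s, v)).1.map (tm0Cfg · ((ofTM0 M).step (some s, v)).2) =
      TM0.step M (tm0Cfg s v) := by
  obtain ⟨c, a, w, rfl⟩ : ∃ (c a : Fin m) (w : ℕ × ℕ), v = (c + m * w.1, a + m * w.2) :=
    ⟨Fin.ofNat m v.1, Fin.ofNat m v.2, (v.1 / m, v.2 / m), by simp [Nat.mod_add_div]⟩
  rw [step_add_mul]
  simp only [tm0Cfg, TM0.step, digitTape_add_mul hm, Tape.mk'_head, ListBlank.head_cons, ofTM0]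
  rcases M s a with _ | ⟨s', (_ | _) | b⟩
  · rfl
  · have left (w : ℕ) : (c + m * a : ℕ) + m * m * w = c + m * (a + m * w) := by ring
    simp [left, digitTape_add_mul hm]
  · have right (w : ℕ) : (a + m * c : ℕ) + m * m * w = a + m * (c + m * w) := by ring
    simp [right, digitTape_add_mul hm]
  · simp [digitTape_add_mul hm]

theorem step_ofTM0_none (M : TM0.Machine (Fin m) Λ) (v : ℕ × ℕ) :
    (ofTM0 M).step (none, v) = (none, (v.1 / m, v.2 / m)) := by
  simp [step, ofTM0, Prod.mk_zero_zero]

theorem halts_ofTM0_none (hm : 1 < m) (M : TM0.Machine (Fin m) Λ) (v : ℕ × ℕ) :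
    (ofTM0 M).Halts none (none, v) := by
  have iterate (n : ℕ) :
      (ofTM0 M).step^[n] (none, v) = (none, (v.1 / m ^ n, v.2 / m ^ n)) := by
    induction n with
    | zero => simp
    | succ n ih =>
      rw [Function.iterate_succ_apply', ih, step_ofTM0_none, Nat.div_div_eq_div_mul,
        Nat.div_div_eq_div_mul, pow_succ]
  have lt_pow : v.1 + v.2 < m ^ (v.1 + v.2) := Nat.lt_pow_self hm
  refine ⟨v.1 + v.2, ?_⟩
  rw [iterate, Nat.div_eq_of_lt (by omega), Nat.div_eq_of_lt (by omega)]
  rfl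

theorem step_ofTM0_none_zero (M : TM0.Machine (Fin m) Λ) :
    (ofTM0 M).step (none, 0) = (none, 0) := by
  simp [step_ofTM0_none, Prod.mk_zero_zero]

theorem eval_dom_of_halts_ofTM0 (hm : 1 < m) {M : TM0.Machine (Fin m) Λ} {s : Λ} {v : ℕ × ℕ}
    (h : (ofTM0 M).Halts none (some s, v)) :
    (StateTransition.eval (TM0.step M) (tm0Cfg s v)).Dom := by
  obtain ⟨n, hn⟩ := h
  induction n generalizing s v with
  | zero => simp at hn
  | succ n ih =>
    rw [Function.iterate_succ_apply] at hn
    have simulates := map_tm0Cfg_step_ofTM0 hm M s v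
    rcases hstep : (ofTM0 M).step (some s, v) with ⟨_ | s', v'⟩ <;>
      simp only [hstep, Option.map_none, Option.map_some] at simulates hn
    · exact Part.dom_iff_mem.2 ⟨_, StateTransition.mem_eval.2 ⟨.refl, simulates.symm⟩⟩
    · rw [StateTransition.reaches_eval (.single simulates.symm)]
      exact ih hn

theorem halts_ofTM0_of_eval_dom (hm : 1 < m) {M : TM0.Machine (Fin m) Λ} {s : Λ} {v : ℕ × ℕ}
    (h : (StateTransition.eval (TM0.step M) (tm0Cfg s v)).Dom) :
    (ofTM0 M).Halts none (some s, v) := by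
  obtain ⟨D, hD⟩ := Part.dom_iff_mem.1 h
  obtain ⟨reaches, final⟩ := StateTransition.mem_eval.1 hD
  clear h hD
  generalize hC : (tm0Cfg s v : TM0.Cfg (Fin m) Λ) = C at reaches
  induction reaches using Relation.ReflTransGen.head_induction_on generalizing s v with
  | refl =>
    have simulates := map_tm0Cfg_step_ofTM0 hm M s v
    rw [hC, final, Option.map_eq_none_iff] at simulates
    have hstep : (ofTM0 M).step (some s, v) = (none, _) := Prod.ext simulates rfl
    rw [← halts_step_iff (step_ofTM0_none_zero M), hstep]
    exact halts_ofTM0_none hm M _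
  | head hstep _ ih =>
    have simulates := map_tm0Cfg_step_ofTM0 hm M s v
    rw [hC, hstep, Option.map_eq_some_iff] at simulates
    obtain ⟨s', hs', hC'⟩ := simulates
    have hstep' : (ofTM0 M).step (some s, v) = (some s', _) := Prod.ext hs' rfl
    rw [← halts_step_iff (step_ofTM0_none_zero M), hstep']
    exact ih hC'

theorem halts_ofTM0_iff (hm : 1 < m) (M : TM0.Machine (Fin m) Λ) (s : Λ) (v : ℕ × ℕ) :
    (ofTM0 M).Halts none (some s, v) ↔
      (StateTransition.eval (TM0.step M) (tm0Cfg s v)).Dom :=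
  ⟨eval_dom_of_halts_ofTM0 hm, halts_ofTM0_of_eval_dom hm⟩

theorem exists_not_computablePred_halts :
    ∃ (Q : Type) (_ : Finite Q) (m : ℕ) (_ : NeZero m) (P : ModularMachine Q m) (start halt : Q)
      (N : ℕ → ℕ), Primrec N ∧ P.step (halt, 0) = (halt, 0) ∧
      ¬ ComputablePred fun j => P.Halts halt (start, 0, N j) := by
  obtain ⟨m, _, Λ, _, _, M, u, v, w, hm, hundec⟩ := exists_TM0_fin_not_computablePred_eval_dom
  let input (j : ℕ) : List (Fin m) := u :: v :: List.replicate j w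
  have hinput : Primrec fun j => Nat.ofDigits m ((input j).map Fin.val) := by
    have tail : Primrec fun j : ℕ => Nat.ofDigits m ((List.replicate j w).map Fin.val) := by
      refine (Primrec.nat_rec₁ 0 (Primrec.nat_add.comp₂ (.const (w : ℕ))
        (Primrec.nat_mul.comp₂ (.const m) Primrec₂.right))).of_eq fun j => ?_
      induction j with
      | zero => rfl
      | succ j ih => simp only [List.replicate_succ, List.map_cons, Nat.ofDigits_cons, ← ih]
    have cons (d : ℕ) {f : ℕ → ℕ} (hf : Primrec f) : Primrec fun j => d + m * f j :=
      Primrec.nat_add.comp (.const d) (Primrec.nat_mul.comp (.const m) hf)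
    simpa [input, Nat.ofDigits_cons] using cons u (cons v tail)
  refine ⟨Option Λ, inferInstance, m, inferInstance, ofTM0 M, some default, none, _, hinput,
    step_ofTM0_none_zero M, fun h => hundec (h.of_eq fun j => ?_)⟩
  have init_eq : tm0Cfg (default : Λ) (0, Nat.ofDigits m ((input j).map Fin.val)) =
      TM0.init (input j) := by
    rw [tm0Cfg, digitTape_zero, digitTape_ofDigits hm]
    rfl
  rw [halts_ofTM0_iff hm, init_eq]
  rfl

end ModularMachine

end ModularMachines

section Relations

open scoped commutatorElement

namespace ModularMachine

variable {Q : Type*} {m : ℕ}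

/-- The generators of the group attached to a modular machine: `x` and `y` move the two coordinates
of a configuration, `t q` stands for the state `q`, `r q c a` for the rule `P q c a`, and `z` is
trivial whenever `k` commutes with the initial configuration described by `p`. -/
inductive Letter (Q : Type*) (m : ℕ)
  | x | y | k | p | z
  | t (q : Q)
  | r (q : Q) (c a : Fin m)

instance [Finite Q] : Finite (Letter Q m) := by
  let decode : Fin 5 ⊕ Q ⊕ (Q × Fin m × Fin m) → Letter Q m
    | .inl i => ![.x, .y, .k, .p, .z] i
    | .inr (.inl q) => .t q
    | .inr (.inr (q, c, a)) => .r q c a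
  refine Finite.of_surjective decode ?_
  rintro (_ | _ | _ | _ | _ | q | ⟨q, c, a⟩)
  exacts [⟨.inl 0, rfl⟩, ⟨.inl 1, rfl⟩, ⟨.inl 2, rfl⟩, ⟨.inl 3, rfl⟩, ⟨.inl 4, rfl⟩,
    ⟨.inr (.inl q), rfl⟩, ⟨.inr (.inr (q, c, a)), rfl⟩]

section Group

variable {G H : Type*} [Group G] [Group H] (g : Letter Q m → G)

/-- The product `x ^ v.1 * y ^ v.2`. -/
def translation (v : ℕ × ℕ) : G := g .x ^ v.1 * g .y ^ v.2

/-- The group element standing for a configuration: the conjugate of `t q` by `translation v`. -/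
def conf (C : Q × ℕ × ℕ) : G := translation g C.2 * g (.t C.1) * (translation g C.2)⁻¹

/-- The defining relations, as pairs of elements to be identified. Conjugation by `r q c a` carries
the configuration `(q, (c, a) + m * v)` to its successor and fixes `k`; `k` commutes with the
halting configuration. -/
def relations (P : ModularMachine Q m) (start halt : Q) : Set (G × G) :=
  {(g .x * g .y, g .y * g .x), (g .k * g (.t halt), g (.t halt) * g .k),
      (g .z, ⁅g .k, g .p * g (.t start) * (g .p)⁻¹⁆)} ∪
    ⋃ (q : Q) (c : Fin m) (a : Fin m),
      {(g (.r q c a) * g .x ^ m, g .x ^ (P q c a).modulus.1 * g (.r q c a)),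
        (g (.r q c a) * g .y ^ m, g .y ^ (P q c a).modulus.2 * g (.r q c a)),
        (g (.r q c a) * conf g (q, c, a),
          conf g ((P q c a).state, (P q c a).offset) * g (.r q c a)),
        (g (.r q c a) * g .k, g .k * g (.r q c a))}

variable (P : ModularMachine Q m) (start halt : Q)

theorem finite_relations [Finite Q] : (relations g P start halt).Finite :=
  (Set.toFinite _).union <| Set.finite_iUnion fun _ => Set.finite_iUnion fun _ =>
    Set.finite_iUnion fun _ => Set.toFinite _

theorem map_conf (φ : G →* H) (C : Q × ℕ × ℕ) : φ (conf g C) = conf (φ ∘ g) C := by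
  simp [conf, translation]

theorem relations_comp (φ : G →* H) :
    relations (φ ∘ g) P start halt = Prod.map φ φ '' relations g P start halt := by
  simp [relations, Set.image_union, Set.image_iUnion, Set.image_insert_eq, map_conf,
    map_commutatorElement]

variable {g P start halt}

theorem relations_subset_diagonal_iff :
    relations g P start halt ⊆ Set.diagonal G ↔
      (Commute (g .x) (g .y) ∧ Commute (g .k) (g (.t halt)) ∧
        g .z = ⁅g .k, g .p * g (.t start) * (g .p)⁻¹⁆) ∧
      ∀ q c a, SemiconjBy (g (.r q c a)) (g .x ^ m) (g .x ^ (P q c a).modulus.1) ∧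
        SemiconjBy (g (.r q c a)) (g .y ^ m) (g .y ^ (P q c a).modulus.2) ∧
        SemiconjBy (g (.r q c a)) (conf g (q, c, a)) (conf g ((P q c a).state, (P q c a).offset)) ∧
        Commute (g (.r q c a)) (g .k) := by
  simp only [relations, Set.union_subset_iff, Set.iUnion_subset_iff, Set.insert_subset_iff,
    Set.singleton_subset_iff]
  rfl

theorem translation_add (hxy : Commute (g .x) (g .y)) (v w : ℕ × ℕ) :
    translation g (v + w) = translation g v * translation g w := by
  rw [translation, translation, translation, Prod.fst_add, Prod.snd_add, pow_add, pow_add,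
    ((hxy.pow_pow w.1 v.2).symm).mul_mul_mul_comm]

theorem conf_add (hxy : Commute (g .x) (g .y)) (q : Q) (v w : ℕ × ℕ) :
    conf g (q, v + w) = translation g w * conf g (q, v) * (translation g w)⁻¹ := by
  simp only [conf, add_comm v w, translation_add hxy, mul_inv_rev, mul_assoc]

theorem semiconjBy_conf_step [NeZero m] (h : relations g P start halt ⊆ Set.diagonal G) (q : Q)
    (c a : Fin m) (v : ℕ × ℕ) :
    SemiconjBy (g (.r q c a)) (conf g (q, (c + m * v.1, a + m * v.2)))
      (conf g (P.step (q, (c + m * v.1, a + m * v.2)))) := by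
  obtain ⟨⟨hxy, -, -⟩, hr⟩ := relations_subset_diagonal_iff.1 h
  obtain ⟨hx, hy, hconf, -⟩ := hr q c a
  have htranslation : SemiconjBy (g (.r q c a)) (translation g (m * v.1, m * v.2))
      (translation g ((P q c a).modulus * v)) := by
    simp only [translation, Prod.fst_mul, Prod.snd_mul, pow_mul]
    exact (hx.pow_right _).mul_right (hy.pow_right _)
  rw [step_add_mul, ← Prod.mk_add_mk, conf_add hxy, conf_add hxy]
  exact (htranslation.mul_right hconf).mul_right htranslation.inv_right

theorem commute_k_conf_of_halts [NeZero m] (h : relations g P start halt ⊆ Set.diagonal G)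
    {C : Q × ℕ × ℕ} (hC : P.Halts halt C) : Commute (g .k) (conf g C) := by
  obtain ⟨n, hn⟩ := hC
  induction n generalizing C with
  | zero =>
    rw [show C = (halt, 0) from hn]
    simpa [conf, translation] using (relations_subset_diagonal_iff.1 h).1.2.1
  | succ n ih =>
    obtain ⟨q, v⟩ := C
    obtain ⟨c, a, w, rfl⟩ : ∃ (c a : Fin m) (w : ℕ × ℕ), v = (c + m * w.1, a + m * w.2) :=
      ⟨Fin.ofNat m v.1, Fin.ofNat m v.2, (v.1 / m, v.2 / m), by simp [Nat.mod_add_div]⟩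
    have hr := semiconjBy_conf_step h q c a w
    have hk : Commute (g (.r q c a)) (g .k) := ((relations_subset_diagonal_iff.1 h).2 q c a).2.2.2
    exact mul_left_cancel <| calc
      g (.r q c a) * (g .k * conf g (q, _)) = g .k * conf g (P.step (q, _)) * g (.r q c a) :=
        (SemiconjBy.mul_right hk hr).eq
      _ = conf g (P.step (q, _)) * g .k * g (.r q c a) := by rw [(ih hn).eq]
      _ = g (.r q c a) * (conf g (q, _) * g .k) := (hr.mul_right hk).eq.symm

theorem z_eq_one_of_halts [NeZero m] (h : relations g P start halt ⊆ Set.diagonal G) {N : ℕ}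
    (hp : g .y ^ N = g .p) (hN : P.Halts halt (start, 0, N)) : g .z = 1 := by
  have hz : g .z = ⁅g .k, g .p * g (.t start) * (g .p)⁻¹⁆ :=
    (relations_subset_diagonal_iff.1 h).1.2.2
  rw [hz, ← hp, commutatorElement_eq_one_iff_commute]
  simpa [conf, translation] using commute_k_conf_of_halts h hN

end Group

end ModularMachine

end Relations

section Model

open Cardinal

universe u v

theorem exists_equiv_of_mk_fiber_eq {A C : Type u} {B : Type v} {f : A → B} {g : C → B}
    (hfg : ∀ b, #{a // f a = b} = #{c // g c = b}) {a : A} {c : C} (h : f a = g c) :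
    ∃ θ : A ≃ C, (∀ x, g (θ x) = f x) ∧ θ a = c := by
  classical
  have e (b : B) : {a // f a = b} ≃ {c // g c = b} := Classical.choice (Cardinal.eq.1 (hfg b))
  have he (x : A) : g (Equiv.ofFiberEquiv e x) = f x := Equiv.ofFiberEquiv_map e x
  refine ⟨(Equiv.ofFiberEquiv e).trans (Equiv.swap (Equiv.ofFiberEquiv e a) c), fun x => ?_,
    by simp⟩
  have hswap := Equiv.apply_swap_eq_self ((he a).trans h) (Equiv.ofFiberEquiv e x)
  exact hswap.trans (he x)

/-- A layer of the model: a copy of `V` carrying a set of marked points. The second component is a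
dummy, which provides sufficiently many layers with the same marked points. -/
abbrev Layer (V : Type*) : Type _ := Set V × Set V

/-- A site of the model: a point of a layer. -/
abbrev Site (V : Type*) : Type _ := V × Layer V

theorem mk_fiber_preimage {V K : Type u} [Infinite V] [Finite K] [Nonempty K] (e : V × K ≃ V)
    (B : Set V) : #{s : K × Layer V // (fun w => e (w, s.1)) ⁻¹' s.2.1 = B} = #(Set V) := by
  refine le_antisymm ((mk_subtype_le _).trans ?_) ?_
  · have hK : #K ≤ #(Set V) := (lt_aleph0_of_finite K).le.trans (aleph0_le_mk _)
    simp only [mk_prod, lift_id, mul_eq_self (aleph0_le_mk (Set V)),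
      mul_eq_right (aleph0_le_mk _) hK (mk_ne_zero K), le_refl]
  · obtain ⟨j⟩ := ‹Nonempty K›
    have hinj : Function.Injective fun w => e (w, j) := fun w w' h => by simpa using h
    refine mk_le_of_injective (f := fun D : Set V =>
      ⟨(j, ((fun w => e (w, j)) '' B, D)), Set.preimage_image_eq B hinj⟩) fun D D' h => ?_
    simpa using h

theorem exists_perm_site {V K K' : Type u} [Infinite V] [Finite K] [Finite K'] (e : V × K ≃ V)
    (e' : V × K' ≃ V) {j : K} {j' : K'} {l l' : Layer V}
    (h : ∀ w, e (w, j) ∈ l.1 ↔ e' (w, j') ∈ l'.1) :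
    ∃ R : Equiv.Perm (Site V), (∀ w, R (e (w, j), l) = (e' (w, j'), l')) ∧
      (∀ i L, ∃ i' L', ∀ w, R (e (w, i), L) = (e' (w, i'), L')) ∧
      ∀ s, (R s).1 ∈ (R s).2.1 ↔ s.1 ∈ s.2.1 := by
  have : Nonempty K := ⟨j⟩
  have : Nonempty K' := ⟨j'⟩
  obtain ⟨θ, hθ, hθl⟩ := exists_equiv_of_mk_fiber_eq
    (f := fun s : K × Layer V => (fun w => e (w, s.1)) ⁻¹' s.2.1)
    (g := fun s : K' × Layer V => (fun w => e' (w, s.1)) ⁻¹' s.2.1)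
    (fun B => (mk_fiber_preimage e B).trans (mk_fiber_preimage e' B).symm)
    (a := (j, l)) (c := (j', l')) (Set.ext h)
  let A : V × K × Layer V ≃ Site V := (Equiv.prodAssoc _ _ _).symm.trans (e.prodCongr (.refl _))
  let A' : V × K' × Layer V ≃ Site V := (Equiv.prodAssoc _ _ _).symm.trans (e'.prodCongr (.refl _))
  let R : Equiv.Perm (Site V) := A.symm.trans (((Equiv.refl V).prodCongr θ).trans A')
  have hR (w i L) : R (e (w, i), L) = (e' (w, (θ (i, L)).1), (θ (i, L)).2) := by
    simp [R, A, A']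
  refine ⟨R, fun w => by rw [hR, hθl], fun i L => ⟨_, _, fun w => hR w i L⟩, fun ⟨v, L⟩ => ?_⟩
  obtain ⟨⟨w, i⟩, rfl⟩ := e.surjective v
  rw [hR]
  exact Set.ext_iff.1 (hθ (i, L)) w

/-- The translations of the points of all layers, as permutations of the sites. -/
def translateSite (V : Type*) [AddGroup V] : Multiplicative V →* Equiv.Perm (Site V) where
  toFun v := (Equiv.addLeft v.toAdd).prodCongr (.refl _)
  map_one' := by ext1; simp
  map_mul' v w := by ext1 ⟨u, L⟩; simp [add_assoc]

@[simp]
theorem translateSite_apply {V : Type*} [AddGroup V] (v : Multiplicative V) (s : Site V) :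
    translateSite V v s = (v.toAdd + s.1, s.2) :=
  rfl

/-- The inclusion of the pairs of natural numbers into the pairs of integers. -/
def intPoint : ℕ × ℕ →+* ℤ × ℤ := (Nat.castRingHom ℤ).prodMap (Nat.castRingHom ℤ)

theorem intPoint_injective : Function.Injective intPoint :=
  Nat.cast_injective.prodMap Nat.cast_injective

/-- Division with remainder in both coordinates: `(w, j)` corresponds to `j + (p, q) * w`. -/
def intProdDivMod (p q : ℕ) [NeZero p] [NeZero q] : (ℤ × ℤ) × (Fin p × Fin q) ≃ ℤ × ℤ :=
  (Equiv.prodProdProdComm _ _ _ _).trans <|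
    (Int.divModEquiv p).symm.prodCongr (Int.divModEquiv q).symm

section DivMod

variable {p q : ℕ} [NeZero p] [NeZero q]

theorem intProdDivMod_apply (w : ℤ × ℤ) (j : Fin p × Fin q) :
    intProdDivMod p q (w, j) = intPoint (p, q) * w + intPoint (j.1, j.2) := by
  ext <;> simp [intProdDivMod, intPoint, mul_comm]

theorem intPoint_mul_add_intProdDivMod (v : ℕ × ℕ) (w : ℤ × ℤ) (j : Fin p × Fin q) :
    intPoint ((p, q) * v) + intProdDivMod p q (w, j) = intProdDivMod p q (intPoint v + w, j) := by
  simp only [intProdDivMod_apply, map_mul]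
  ring

theorem intProdDivMod_mem_image_iff (S : Set (ℕ × ℕ)) (w : ℤ × ℤ) (j : Fin p × Fin q) :
    intProdDivMod p q (w, j) ∈ intPoint '' S ↔
      ∃ v, intPoint v = w ∧ (j.1 + p * v.1, j.2 + q * v.2) ∈ S := by
  constructor
  · rintro ⟨u, hu, huw⟩
    have hdiv : intProdDivMod p q (intPoint (u.1 / p, u.2 / q), Fin.ofNat p u.1, Fin.ofNat q u.2) =
        intPoint u := by
      rw [intProdDivMod_apply, ← map_mul, ← map_add]
      simp [Nat.div_add_mod]
    obtain ⟨rfl, rfl⟩ := Prod.ext_iff.1 ((intProdDivMod p q).injective (huw.symm.trans hdiv.symm))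
    exact ⟨_, rfl, by simpa [Nat.mod_add_div] using hu⟩
  · rintro ⟨v, rfl, hv⟩
    exact ⟨_, hv, by rw [intProdDivMod_apply, ← map_mul, ← map_add, add_comm ((p, q) * v)]; rfl⟩

theorem exists_perm_site_semiconjBy_translateSite {p' q' : ℕ} [NeZero p'] [NeZero q']
    {j : Fin p × Fin q} {j' : Fin p' × Fin q'} {l l' : Layer (ℤ × ℤ)}
    (h : ∀ w, intProdDivMod p q (w, j) ∈ l.1 ↔ intProdDivMod p' q' (w, j') ∈ l'.1) :
    ∃ R : Equiv.Perm (Site (ℤ × ℤ)),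
      R (intPoint (j.1, j.2), l) = (intPoint (j'.1, j'.2), l') ∧
      (∀ v, SemiconjBy R (translateSite _ (.ofAdd (intPoint ((p, q) * v))))
        (translateSite _ (.ofAdd (intPoint ((p', q') * v))))) ∧
      ∀ s, (R s).1 ∈ (R s).2.1 ↔ s.1 ∈ s.2.1 := by
  obtain ⟨R, hl, hR, hmark⟩ := exists_perm_site (intProdDivMod p q) (intProdDivMod p' q') h
  refine ⟨R, by simpa [intProdDivMod_apply] using hl 0, fun v => ?_, hmark⟩
  ext1 ⟨u, L⟩
  obtain ⟨⟨w, i⟩, rfl⟩ := (intProdDivMod p q).surjective u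
  obtain ⟨i', L', hRw⟩ := hR i L
  simp [-map_mul, intPoint_mul_add_intProdDivMod, hRw]

end DivMod

end Model

section WreathProduct

open SemidirectProduct DihedralGroup

/-- The unrestricted wreath product of the infinite dihedral group with the permutations of `S`,
thought of as permuting the fibres of `S × ℤ → S` and acting on each fibre by an isometry. -/
abbrev DihedralWreath (S : Type*) : Type _ :=
  (S → DihedralGroup 0) ⋊[(mulAutArrow : Equiv.Perm S →* MulAut (S → DihedralGroup 0))] Equiv.Perm S

namespace DihedralWreath

variable {S : Type*}

/-- The permutation of the first coordinate by `R`. -/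
def permute : Equiv.Perm S →* DihedralWreath S := inr

open Classical in
/-- The reflection of the fibres over the points of `T`. -/
noncomputable def reflect (T : Set S) : DihedralWreath S := inl fun s => if s ∈ T then sr 0 else 1

open Classical in
/-- The unit translation of the fibre over `s`. -/
noncomputable def translateAt (s : S) : DihedralWreath S :=
  inl (Pi.mulSingle s (r 1) : S → DihedralGroup 0)

theorem semiconjBy_permute_inl {R : Equiv.Perm S} {f f' : S → DihedralGroup 0}
    (h : ∀ s, f' (R s) = f s) : SemiconjBy (permute R) (inl f) (inl f') := by
  have hf : f' = mulAutArrow R f := by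
    ext1 s
    change f' s = f (R.symm s)
    rw [← h, Equiv.apply_symm_apply]
  rw [hf, inl_aut, map_inv]
  exact SemiconjBy.conj_mk _ _

theorem semiconjBy_permute_translateAt (R : Equiv.Perm S) (s : S) :
    SemiconjBy (permute R) (translateAt s) (translateAt (R s)) := by
  refine semiconjBy_permute_inl fun s' => ?_
  classical
  by_cases hs : s' = s
  · simp [hs]
  · rw [Pi.mulSingle_eq_of_ne hs, Pi.mulSingle_eq_of_ne (R.injective.ne hs)]

theorem commute_permute_reflect {R : Equiv.Perm S} {T : Set S} (h : ∀ s, R s ∈ T ↔ s ∈ T) :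
    Commute (permute R) (reflect T) := by
  classical exact semiconjBy_permute_inl fun s => if_congr (h s) rfl rfl

open scoped commutatorElement

open Classical in
theorem commutator_reflect_translateAt (T : Set S) (s : S) :
    ⁅reflect T, translateAt s⁆ =
      inl (Pi.mulSingle s (if s ∈ T then r (-2) else 1) : S → DihedralGroup 0) := by
  rw [reflect, translateAt, ← map_commutatorElement]
  congr 1
  ext1 s'
  rw [commutatorElement_def]
  obtain rfl | hs := eq_or_ne s' s
  · by_cases hT : s' ∈ T
    · simp only [hT, if_true, Pi.mul_apply, Pi.inv_apply, Pi.mulSingle_eq_same]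
      rfl
    · simp [hT]
  · simp [hs]

theorem commute_reflect_translateAt {T : Set S} {s : S} (hs : s ∉ T) :
    Commute (reflect T) (translateAt s) := by
  classical
  rw [← commutatorElement_eq_one_iff_commute, commutator_reflect_translateAt, if_neg hs,
    Pi.mulSingle_one, map_one]

theorem eq_zero_of_commutator_zpow_eq_one {T : Set S} {s : S} (hs : s ∈ T) {i : ℤ}
    (hi : ⁅reflect T, translateAt s⁆ ^ i = 1) : i = 0 := by
  classical
  rw [commutator_reflect_translateAt, if_pos hs, ← map_zpow, map_eq_one_iff _ inl_injective] at hi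
  have hr : (r (-2) : DihedralGroup 0) ^ i = 1 := by
    simpa using congrFun hi s
  rw [r_zpow] at hr
  exact (mul_eq_zero.1 (r.inj hr : (-2 : ℤ) * i = 0)).resolve_left (by decide)

end DihedralWreath

namespace ModularMachine

variable {Q : Type} {m : ℕ} [NeZero m] (P : ModularMachine Q m) (start halt : Q) (N : ℕ)

/-- The layer in which the marked points are the halting configurations with state `q`. -/
def haltingLayer (q : Q) : Layer (ℤ × ℤ) := (intPoint '' {v | P.Halts halt (q, v)}, ∅)

variable {P halt} in
theorem intPoint_mem_haltingLayer {q : Q} {v : ℕ × ℕ} :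
    intPoint v ∈ (P.haltingLayer halt q).1 ↔ P.Halts halt (q, v) :=
  intPoint_injective.mem_set_image

theorem exists_perm_site_rule (hfix : P.step (halt, 0) = (halt, 0)) (q : Q) (c a : Fin m) :
    ∃ R : Equiv.Perm (Site (ℤ × ℤ)),
      R (intPoint (c, a), P.haltingLayer halt q) =
        (intPoint (P q c a).offset, P.haltingLayer halt (P q c a).state) ∧
      (∀ v, SemiconjBy R (translateSite _ (.ofAdd (intPoint ((m, m) * v))))
        (translateSite _ (.ofAdd (intPoint ((P q c a).modulus * v))))) ∧
      ∀ s, (R s).1 ∈ (R s).2.1 ↔ s.1 ∈ s.2.1 := by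
  have : NeZero (P q c a).modulus.1 := .of_gt (P q c a).fst_lt
  have : NeZero (P q c a).modulus.2 := .of_gt (P q c a).snd_lt
  refine exists_perm_site_semiconjBy_translateSite (p := m) (q := m) (j := (c, a))
    (j' := (⟨_, (P q c a).fst_lt⟩, ⟨_, (P q c a).snd_lt⟩)) fun w => ?_
  simp only [haltingLayer, intProdDivMod_mem_image_iff]
  refine exists_congr fun v => and_congr_right fun _ => ?_
  have hstep := halts_step_iff hfix (q, (c + m * v.1, a + m * v.2))
  rw [step_add_mul] at hstep
  exact hstep.symm

open DihedralWreath
open scoped commutatorElement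

/-- The model of the relations of a modular machine in which `k` and `t q` act on the fibres over
the sites, and `x`, `y`, `p` and the rules permute the sites, the latter through `R`. -/
noncomputable def siteModel (R : Q → Fin m → Fin m → Equiv.Perm (Site (ℤ × ℤ))) :
    Letter Q m → DihedralWreath (Site (ℤ × ℤ))
  | .x => permute (translateSite _ (.ofAdd (intPoint (1, 0))))
  | .y => permute (translateSite _ (.ofAdd (intPoint (0, 1))))
  | .p => permute (translateSite _ (.ofAdd (intPoint (0, N))))
  | .k => reflect {s : Site (ℤ × ℤ) | s.1 ∉ s.2.1}
  | .z => ⁅reflect {s : Site (ℤ × ℤ) | s.1 ∉ s.2.1},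
      translateAt (intPoint (0, N), P.haltingLayer halt start)⁆
  | .t q => translateAt (0, P.haltingLayer halt q)
  | .r q c a => permute (R q c a)

variable {N} (R : Q → Fin m → Fin m → Equiv.Perm (Site (ℤ × ℤ)))

theorem translation_siteModel (v : ℕ × ℕ) :
    translation (P.siteModel start halt N R) v =
      permute (translateSite _ (.ofAdd (intPoint v))) := by
  have hv : intPoint v = v.1 • intPoint (1, 0) + v.2 • intPoint (0, 1) := by
    ext <;> simp [intPoint]
  simp only [translation, siteModel, hv, ofAdd_add, ofAdd_nsmul, map_mul, map_pow]

theorem conf_siteModel (q : Q) (v : ℕ × ℕ) : conf (P.siteModel start halt N R) (q, v) =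
    translateAt (intPoint v, P.haltingLayer halt q) := by
  have hsemiconj := semiconjBy_permute_translateAt (translateSite _ (.ofAdd (intPoint v)))
    (0, P.haltingLayer halt q)
  rw [conf, translation_siteModel, mul_inv_eq_iff_eq_mul]
  simp only [translateSite_apply, toAdd_ofAdd, add_zero] at hsemiconj
  exact hsemiconj.eq

theorem siteModel_y_pow : P.siteModel start halt N R .y ^ N = P.siteModel start halt N R .p := by
  simpa [translation, siteModel] using translation_siteModel P start halt (N := N) R (0, N)

variable {P halt R} in
theorem relations_siteModel_subset_diagonal
    (hR : ∀ q c a, R q c a (intPoint (c, a), P.haltingLayer halt q) =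
      (intPoint (P q c a).offset, P.haltingLayer halt (P q c a).state))
    (hRv : ∀ q c a v, SemiconjBy (R q c a) (translateSite _ (.ofAdd (intPoint ((m, m) * v))))
      (translateSite _ (.ofAdd (intPoint ((P q c a).modulus * v)))))
    (hRk : ∀ q c a s, (R q c a s).1 ∈ (R q c a s).2.1 ↔ s.1 ∈ s.2.1) :
    relations (P.siteModel start halt N R) P start halt ⊆ Set.diagonal _ := by
  have hrule (q c a) (v : ℕ × ℕ) : SemiconjBy (P.siteModel start halt N R (.r q c a))
      (translation (P.siteModel start halt N R) ((m, m) * v))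
      (translation (P.siteModel start halt N R) ((P q c a).modulus * v)) := by
    rw [translation_siteModel, translation_siteModel]
    exact (hRv q c a v).map permute
  refine relations_subset_diagonal_iff.2 ⟨⟨?_, ?_, ?_⟩, fun q c a => ⟨?_, ?_, ?_, ?_⟩⟩
  · exact ((Commute.all _ _).map (translateSite _)).map permute
  · have hhalt : intPoint 0 ∈ (P.haltingLayer halt halt).1 :=
      intPoint_mem_haltingLayer.2 ⟨0, rfl⟩
    exact commute_reflect_translateAt (not_not.2 (by simpa using hhalt))
  · rw [← siteModel_y_pow]
    have hconf := conf_siteModel P start halt (N := N) R start (0, N)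
    simp only [conf, translation, pow_zero, one_mul] at hconf
    rw [hconf]
    rfl
  · simpa [translation] using hrule q c a (1, 0)
  · simpa [translation] using hrule q c a (0, 1)
  · rw [conf_siteModel, conf_siteModel, ← hR]
    exact semiconjBy_permute_translateAt _ _
  · exact commute_permute_reflect fun s => not_congr (hRk q c a s)

theorem exists_relations_subset_diagonal (hfix : P.step (halt, 0) = (halt, 0))
    (hN : ¬ P.Halts halt (start, 0, N)) :
    ∃ (G : Type) (_ : Group G) (g : Letter Q m → G),
      relations g P start halt ⊆ Set.diagonal G ∧ g .y ^ N = g .p ∧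
        ∀ i : ℤ, g .z ^ i = 1 → i = 0 := by
  choose R hR hRv hRk using P.exists_perm_site_rule halt hfix
  refine ⟨_, inferInstance, P.siteModel start halt N R,
    relations_siteModel_subset_diagonal start hR hRv hRk, siteModel_y_pow P start halt R,
    fun i hi => eq_zero_of_commutator_zpow_eq_one ?_ hi⟩
  exact intPoint_mem_haltingLayer.not.2 hN

end ModularMachine

end WreathProduct

section Presentations

/-- The congruence generated by identifying the two entries of each pair in `R`. -/
def pairsCon {G : Type*} [Mul G] (R : Set (G × G)) : Con G := conGen fun u v => (u, v) ∈ R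

theorem pairsCon_le_ker_iff {G H : Type*} [MulOneClass G] [MulOneClass H] {R : Set (G × G)}
    {φ : G →* H} : pairsCon R ≤ Con.ker φ ↔ Prod.map φ φ '' R ⊆ Set.diagonal H := by
  rw [pairsCon, Con.conGen_le, Set.image_subset_iff]
  exact ⟨fun h u hu => h u.1 u.2 hu, fun h u v huv => h huv⟩

namespace ModularMachine

variable {Q : Type} {m : ℕ} {P : ModularMachine Q m} {start halt : Q} {N : ℕ}

variable (P start halt N) in
/-- The relations of a modular machine in the free group, together with the relation declaring `p`
to be the `N`-th power of `y`. -/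
def presentation : Set (FreeGroup (Letter Q m) × FreeGroup (Letter Q m)) :=
  insert (.of .y ^ N, .of .p) (relations FreeGroup.of P start halt)

theorem presentation_le_ker_iff {G : Type*} [Group G] {φ : FreeGroup (Letter Q m) →* G} :
    pairsCon (P.presentation start halt N) ≤ Con.ker φ ↔
      φ (.of .y) ^ N = φ (.of .p) ∧
        relations (fun s => φ (.of s)) P start halt ⊆ Set.diagonal G := by
  rw [pairsCon_le_ker_iff, presentation, Set.image_insert_eq, ← relations_comp,
    Set.insert_subset_iff, Prod.map_apply, Set.mem_diagonal_iff, map_pow]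
  rfl

variable [NeZero m]

theorem pairsCon_presentation_z_of_halts (hN : P.Halts halt (start, 0, N)) :
    pairsCon (P.presentation start halt N) (.of .z) 1 := by
  obtain ⟨hp, hrel⟩ := presentation_le_ker_iff.1
    (Con.mk'_ker (pairsCon (P.presentation start halt N))).ge
  exact (Con.eq _).1 (z_eq_one_of_halts hrel hp hN)

theorem eq_zero_of_pairsCon_presentation_z_zpow (hfix : P.step (halt, 0) = (halt, 0))
    (hN : ¬ P.Halts halt (start, 0, N)) {i : ℤ}
    (hi : pairsCon (P.presentation start halt N) (.of .z ^ i) 1) : i = 0 := by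
  obtain ⟨G, _, g, hrel, hp, hz⟩ := P.exists_relations_subset_diagonal start halt hfix hN
  have hker : pairsCon (P.presentation start halt N) ≤ Con.ker (FreeGroup.lift g) :=
    presentation_le_ker_iff.2 (by simpa using ⟨hp, hrel⟩)
  exact hz i (by simpa using hker hi)

end ModularMachine

theorem exists_not_computablePred_pairsCon :
    ∃ (L : Type) (_ : Finite L) (_ : Nontrivial L) (y p z : L)
      (R : Set (FreeGroup L × FreeGroup L)) (N : ℕ → ℕ),
      R.Finite ∧ Primrec N ∧
      (¬ ComputablePred fun j => pairsCon (insert (.of y ^ N j, .of p) R) (.of z) 1) ∧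
      ∀ j (i : ℤ), pairsCon (insert (.of y ^ N j, .of p) R) (.of z ^ i) 1 →
        i = 0 ∨ pairsCon (insert (.of y ^ N j, .of p) R) (.of z) 1 := by
  obtain ⟨Q, _, m, _, P, start, halt, N, hN, hfix, hP⟩ :=
    ModularMachine.exists_not_computablePred_halts
  refine ⟨ModularMachine.Letter Q m, inferInstance, ⟨.y, .z, nofun⟩, .y, .p, .z,
    ModularMachine.relations FreeGroup.of P start halt, N,
    ModularMachine.finite_relations _ _ _ _, hN, fun h => hP (h.of_eq fun j => ⟨fun hz => ?_,
      ModularMachine.pairsCon_presentation_z_of_halts⟩), fun j i hi => ?_⟩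
  · by_contra hj
    exact one_ne_zero (ModularMachine.eq_zero_of_pairsCon_presentation_z_zpow hfix hj (i := 1)
      (by rwa [zpow_one]))
  · by_cases hj : P.Halts halt (start, 0, N j)
    · exact .inr (ModularMachine.pairsCon_presentation_z_of_halts hj)
    · exact .inl (ModularMachine.eq_zero_of_pairsCon_presentation_z_zpow hfix hj hi)

theorem mem_closure_diagonal_union_iff {L : Type*} {R : Set (FreeGroup L × FreeGroup L)}
    {u v : FreeGroup L} :
    (u, v) ∈ Subgroup.closure (Set.range (fun s => (FreeGroup.of s, FreeGroup.of s)) ∪ R) ↔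
      pairsCon R u v := by
  set H := Subgroup.closure (Set.range (fun s => (FreeGroup.of s, FreeGroup.of s)) ∪ R)
  constructor
  · let π := (pairsCon R).mk'
    have hle : H ≤ (π.comp (MonoidHom.fst _ _)).eqLocus (π.comp (MonoidHom.snd _ _)) := by
      rw [Subgroup.closure_le]
      rintro w (⟨s, rfl⟩ | hw)
      · rfl
      · exact (Con.eq _).2 (.of _ _ hw)
    exact fun h => (Con.eq _).1 (hle h)
  · have hdiag (w : FreeGroup L) : (w, w) ∈ H := by
      have hle : (⊤ : Subgroup (FreeGroup L)) ≤
          H.comap ((MonoidHom.id _).prod (MonoidHom.id _)) := by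
        rw [← FreeGroup.closure_range_of, Subgroup.closure_le]
        rintro _ ⟨s, rfl⟩
        exact Subgroup.subset_closure (.inl ⟨s, rfl⟩)
      exact hle (Subgroup.mem_top w)
    let c : Con (FreeGroup L) :=
      { r := fun u v => (u, v) ∈ H
        iseqv := by
          refine ⟨hdiag, fun {u v} h => ?_, fun {u v w} h h' => ?_⟩
          · simpa using mul_mem (mul_mem (hdiag u) (inv_mem h)) (hdiag v)
          · simpa using mul_mem (mul_mem h (inv_mem (hdiag v))) h'
        mul' := mul_mem }
    have hc : pairsCon R ≤ c := Con.conGen_le.2 fun u v huv => Subgroup.subset_closure (.inr huv)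
    exact fun h => hc h

end Presentations

section TransvectionRepresentations

open scoped Matrix MatrixGroups

open scoped Pointwise in
theorem freeGroupLift_injective_of_zpow_smul_subset {L G α : Type*} [Nontrivial L] [Group G]
    [MulAction G α] (a : L → G) (X : L → Set α) (hne : ∀ i, (X i).Nonempty)
    (hdisj : Pairwise fun i j => Disjoint (X i) (X j))
    (h : Pairwise fun i j => ∀ k : ℤ, k ≠ 0 → a i ^ k • X j ⊆ X i) :
    Function.Injective (FreeGroup.lift a) := by
  have hlift : FreeGroup.lift a = (Monoid.CoprodI.lift fun i => FreeGroup.lift fun _ => a i).comp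
      (freeGroupEquivCoprodI (ι := L)).toMonoidHom := by
    ext
    simp
  rw [hlift, MonoidHom.coe_comp]
  refine .comp (Monoid.CoprodI.lift_injective_of_ping_pong _ (.inr ?_) X hne hdisj ?_)
    (MulEquiv.injective _)
  · obtain ⟨i⟩ := (inferInstance : Nonempty L)
    exact ⟨i, (Cardinal.natCast_lt_aleph0 (n := 3)).le.trans (Cardinal.aleph0_le_mk _)⟩
  · refine fun i j hij => FreeGroup.freeGroupUnitEquivInt.forall_congr_left.2 fun k hk => ?_
    change FreeGroup.lift _ (FreeGroup.of () ^ k) • X j ⊆ X i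
    rw [map_zpow, FreeGroup.lift_apply_of]
    refine h hij k ?_
    rintro rfl
    exact hk rfl

theorem mk_mem_zpowers_of_commute_of {L : Type*} {a : L} {w : List (L × Bool)}
    (hw : FreeGroup.IsReduced w) (h : Commute (FreeGroup.mk w) (.of a)) :
    FreeGroup.mk w ∈ Subgroup.zpowers (FreeGroup.of a) := by
  classical
  induction w with
  | nil => exact one_mem _
  | cons s w ih =>
    obtain ⟨l, b⟩ := s
    obtain rfl | hl := eq_or_ne l a
    · have hs : FreeGroup.mk [(l, b)] ∈ Subgroup.zpowers (FreeGroup.of l) := by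
        cases b
        · exact inv_mem (Subgroup.mem_zpowers _)
        · exact Subgroup.mem_zpowers _
      obtain ⟨k, hk⟩ := hs
      rw [← List.singleton_append, ← FreeGroup.mul_mk, ← hk] at h ⊢
      refine mul_mem (Subgroup.zpow_mem_zpowers _ _) (ih (List.IsChain.tail hw) ?_)
      simpa using (Commute.zpow_self (FreeGroup.of l) k).inv_left.mul_left h
    · exfalso
      have hcons : FreeGroup.IsReduced ((a, true) :: (l, b) :: w) :=
        FreeGroup.isReduced_cons_cons.2 ⟨fun h => absurd h.symm hl, hw⟩
      have hsub := FreeGroup.toWord_mul_sublist (FreeGroup.mk ((l, b) :: w)) (.of a)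
      rw [h.eq, FreeGroup.of, FreeGroup.mul_mk, FreeGroup.toWord_mk, FreeGroup.toWord_mk,
        FreeGroup.toWord_mk, hw.reduce_eq, FreeGroup.IsReduced.singleton.reduce_eq,
        List.singleton_append, hcons.reduce_eq] at hsub
      have heq := hsub.eq_of_length (by simp)
      exact hl (congrArg Prod.fst (List.cons.inj heq).1).symm

theorem mem_zpowers_of_commute_of {L : Type*} {a : L} {g : FreeGroup L} (h : Commute g (.of a)) :
    g ∈ Subgroup.zpowers (FreeGroup.of a) := by
  classical
  rw [← FreeGroup.mk_toWord (x := g)] at h ⊢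
  exact mk_mem_zpowers_of_commute_of FreeGroup.isReduced_toWord h

/-- The transvection `v ↦ v + (v 1 - e * v 0) • (1, e)` along the line of slope `e`. -/
def slopeTransvection (e : ℤ) : SL(2, ℤ) :=
  ⟨!![1 - e, 1; -e ^ 2, 1 + e], by rw [Matrix.det_fin_two_of]; ring⟩

theorem coe_slopeTransvection (e : ℤ) :
    (slopeTransvection e).1 = !![1 - e, 1; -e ^ 2, 1 + e] :=
  rfl

theorem coe_slopeTransvection_zpow (e k : ℤ) :
    (slopeTransvection e ^ k).1 = !![1 - k * e, k; -k * e ^ 2, 1 + k * e] := by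
  induction k with
  | zero => simp [Matrix.one_fin_two]
  | succ k ih =>
    rw [zpow_add_one, Matrix.SpecialLinearGroup.coe_mul, ih, coe_slopeTransvection,
      Matrix.mul_fin_two]
    congrm !![?_, ?_; ?_, ?_] <;> ring
  | pred k ih =>
    rw [zpow_sub_one, Matrix.SpecialLinearGroup.coe_mul, ih, Matrix.SpecialLinearGroup.coe_inv,
      coe_slopeTransvection, Matrix.adjugate_fin_two_of, Matrix.mul_fin_two]
    congrm !![?_, ?_; ?_, ?_] <;> ring

theorem slopeTransvection_zpow_smul (e k : ℤ) (v : Fin 2 → ℤ) :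
    slopeTransvection e ^ k • v = v + (k * (v 1 - e * v 0)) • ![1, e] := by
  rw [Matrix.SpecialLinearGroup.smul_def, coe_slopeTransvection_zpow]
  ext i
  fin_cases i <;> simp [Matrix.vecHead, Matrix.vecTail] <;> ring

/-- The vectors closer to the line of slope `e l` than to the line of slope `e i` for all other `i`;
the distance of `v` to the line of slope `s` is measured by `|v 1 - s * v 0|`. -/
def closestTo {L : Type*} (e : L → ℤ) (l : L) : Set (Fin 2 → ℤ) :=
  {v | ∀ i, i ≠ l → |v 1 - e l * v 0| < |v 1 - e i * v 0|}

theorem slopeTransvection_zpow_smul_mem_closestTo {L : Type*} {e : L → ℤ} (he : e.Injective)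
    {l j : L} (hlj : l ≠ j) {v : Fin 2 → ℤ} (hv : v ∈ closestTo e j) {k : ℤ} (hk : 4 ≤ |k|) :
    slopeTransvection (e l) ^ k • v ∈ closestTo e l := by
  have abs_le_abs_mul {a b : ℤ} (ha : a ≠ 0) : |b| ≤ |a * b| := by
    rw [abs_mul]
    exact le_mul_of_one_le_left (abs_nonneg b) (Int.one_le_abs ha)
  intro i hi
  set d := v 1 - e l * v 0 with hd
  have hdj : |v 1 - e j * v 0| < |d| := hv l hlj
  have hv0 : |v 0| < 2 * |d| := calc
    |v 0| ≤ |(e l - e j) * v 0| := abs_le_abs_mul (sub_ne_zero.2 (he.ne hlj))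
    _ = |(v 1 - e j * v 0) - d| := by congr 1; ring
    _ ≤ |v 1 - e j * v 0| + |d| := abs_sub _ _
    _ < 2 * |d| := by linarith
  have hkd : 4 * |d| ≤ |k * d| := by
    rw [abs_mul]
    exact mul_le_mul_of_nonneg_right hk (abs_nonneg d)
  have hw0 : 2 * |d| < |v 0 + k * d| := by
    have := abs_sub_abs_le_abs_sub (k * d) (-v 0)
    rw [abs_neg, sub_neg_eq_add, add_comm (k * d)] at this
    linarith
  have hwi : |v 0 + k * d| ≤ |d + (e l - e i) * (v 0 + k * d)| + |d| := calc
    |v 0 + k * d| ≤ |(e l - e i) * (v 0 + k * d)| :=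
      abs_le_abs_mul (sub_ne_zero.2 (he.ne hi.symm))
    _ = |(d + (e l - e i) * (v 0 + k * d)) - d| := by congr 1; ring
    _ ≤ _ := abs_sub _ _
  have hw (s : ℤ) : (v + (k * d) • ![1, e l]) 1 - s * (v + (k * d) • ![1, e l]) 0 =
      d + (e l - s) * (v 0 + k * d) := by
    simp only [hd, Pi.add_apply, Pi.smul_apply, smul_eq_mul, Matrix.cons_val_zero,
      Matrix.cons_val_one]
    ring
  rw [slopeTransvection_zpow_smul, ← hd, hw, hw, sub_self, zero_mul, add_zero]
  linarith

/-- The representation by transvections along the lines of slopes `e l`, raised to the power `4` so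
that they play ping-pong on the sets `closestTo e l`. -/
def transvectionRep {L : Type*} (e : L → ℤ) : FreeGroup L →* SL(2, ℤ) :=
  FreeGroup.lift fun l => slopeTransvection (e l) ^ (4 : ℤ)

theorem transvectionRep_injective {L : Type*} [Nontrivial L] {e : L → ℤ} (he : e.Injective) :
    Function.Injective (transvectionRep e) := by
  refine freeGroupLift_injective_of_zpow_smul_subset _ (closestTo e) (fun l => ?_)
    (fun i j hij => ?_) fun i j hij k hk => ?_
  · refine ⟨![1, e l], fun i hi => ?_⟩
    simpa [sub_eq_zero] using he.ne hi.symm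
  · exact Set.disjoint_left.2 fun v hi hj => lt_asymm (hi j hij.symm) (hj i hij)
  · rw [← zpow_mul]
    rintro _ ⟨v, hv, rfl⟩
    refine slopeTransvection_zpow_smul_mem_closestTo he hij hv ?_
    rw [abs_mul]
    exact le_mul_of_one_le_right (by norm_num) (Int.one_le_abs hk)

theorem commute_T_zpow_of_apply_one_zero_eq_zero {A : SL(2, ℤ)} (hA : A.1 1 0 = 0) (k : ℤ) :
    Commute A (ModularGroup.T ^ k) := by
  have hdet := A.det_coe
  rw [Matrix.det_fin_two, hA, mul_zero, sub_zero] at hdet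
  have hdiag : A.1 0 0 = A.1 1 1 := Int.eq_of_mul_eq_one hdet
  refine Subtype.ext ?_
  rw [Matrix.SpecialLinearGroup.coe_mul, Matrix.SpecialLinearGroup.coe_mul,
    ModularGroup.coe_T_zpow, Matrix.eta_fin_two A.1, hA, hdiag]
  simp [mul_comm, add_comm]

theorem transvectionRep_of_eq_T_zpow {L : Type*} {e : L → ℤ} {l : L} (hl : e l = 0) :
    transvectionRep e (.of l) = ModularGroup.T ^ (4 : ℤ) := by
  rw [transvectionRep, FreeGroup.lift_apply_of, hl]
  congr 1

theorem transvectionRep_apply_one_zero_eq_zero_iff {L : Type*} [Nontrivial L] {e : L → ℤ}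
    (he : e.Injective) {l : L} (hl : e l = 0) {g : FreeGroup L} :
    (transvectionRep e g).1 1 0 = 0 ↔ g ∈ Subgroup.zpowers (FreeGroup.of l) := by
  refine ⟨fun hg => mem_zpowers_of_commute_of ?_, ?_⟩
  · refine .of_map (transvectionRep_injective he) ?_
    rw [transvectionRep_of_eq_T_zpow hl]
    exact commute_T_zpow_of_apply_one_zero_eq_zero hg 4
  · rintro ⟨k, rfl⟩
    change (transvectionRep e (.of l ^ k)).1 1 0 = 0
    rw [map_zpow, transvectionRep_of_eq_T_zpow hl, ← zpow_mul, ModularGroup.coe_T_zpow]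
    rfl

theorem exists_rep_apply_one_zero_eq_zero_iff_mem_zpowers {L : Type*} [Countable L] [Nontrivial L]
    (l : L) : ∃ ρ : FreeGroup L →* SL(2, ℤ), (ρ (.of l)).1 0 1 ≠ 0 ∧
      ∀ g, (ρ g).1 1 0 = 0 ↔ g ∈ Subgroup.zpowers (FreeGroup.of l) := by
  obtain ⟨e, he⟩ := exists_injective_nat L
  let e' (i : L) : ℤ := e i - e l
  have he' : e'.Injective := fun i j hij => he (by simpa [e'] using hij)
  have hl : e' l = 0 := sub_self _
  refine ⟨transvectionRep e', ?_, fun g => transvectionRep_apply_one_zero_eq_zero_iff he' hl⟩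
  rw [transvectionRep_of_eq_T_zpow hl, ModularGroup.coe_T_zpow]
  simp

theorem exists_rep_apply_one_zero_eq_zero_iff_eq_one (L : Type*) [Countable L] [Nonempty L] :
    ∃ ρ : FreeGroup L →* SL(2, ℤ), ∀ g, (ρ g).1 1 0 = 0 ↔ g = 1 := by
  obtain ⟨ρ, -, hρ⟩ := exists_rep_apply_one_zero_eq_zero_iff_mem_zpowers (none : Option L)
  refine ⟨ρ.comp (FreeGroup.map some), fun g => ⟨fun hg => ?_, ?_⟩⟩
  · obtain ⟨k, hk⟩ := (hρ _).1 hg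
    let π : FreeGroup (Option L) →* FreeGroup L := FreeGroup.lift fun l => l.elim 1 .of
    have hπ : π.comp (FreeGroup.map some) = .id _ := by
      ext
      simp [π]
    calc g = π (FreeGroup.map some g) := (DFunLike.congr_fun hπ g).symm
      _ = π (.of none ^ k) := congrArg π hk.symm
      _ = 1 := by simp [π]
  · rintro rfl
    simp

end TransvectionRepresentations

section CornerRepresentation

open Matrix

variable {R : Type*} [CommRing R]

/-- The symmetric square of the standard representation, in the basis `e₀²`, `e₀ e₁`, `e₁²`. -/
def symSquare : Matrix (Fin 2) (Fin 2) R →* Matrix (Fin 3) (Fin 3) R where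
  toFun A := !![A 0 0 ^ 2, A 0 0 * A 0 1, A 0 1 ^ 2;
    2 * A 0 0 * A 1 0, A 0 0 * A 1 1 + A 0 1 * A 1 0, 2 * A 0 1 * A 1 1;
    A 1 0 ^ 2, A 1 0 * A 1 1, A 1 1 ^ 2]
  map_one' := by
    ext i j
    fin_cases i <;> fin_cases j <;> simp
  map_mul' A B := by
    ext i j
    fin_cases i <;> fin_cases j <;>
      simp [Matrix.mul_apply, Fin.sum_univ_two, Fin.sum_univ_three] <;> ring

theorem symSquare_apply_two_zero (A : Matrix (Fin 2) (Fin 2) R) :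
    symSquare A 2 0 = A 1 0 ^ 2 :=
  rfl

theorem symSquare_apply_zero_two (A : Matrix (Fin 2) (Fin 2) R) :
    symSquare A 0 2 = A 0 1 ^ 2 :=
  rfl

/-- The direct sum of two matrix representations, as the block diagonal homomorphism. -/
def blockSum (l m : Type*) [Fintype l] [Fintype m] [DecidableEq l] [DecidableEq m] :
    Matrix l l R × Matrix m m R →* Matrix (l ⊕ m) (l ⊕ m) R where
  toFun p := fromBlocks p.1 0 0 p.2
  map_one' := fromBlocks_one
  map_mul' p q := by simp [fromBlocks_multiply]

theorem exists_conj_apply_eq {ι : Type*} [Fintype ι] [DecidableEq ι] {r r' c c' : ι} (hr : r ≠ r')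
    (hc : c ≠ c') (hrc' : r ≠ c') (hr'c : r' ≠ c) (hr'c' : r' ≠ c') :
    ∃ S : ConjAct (Matrix ι ι R)ˣ,
      ∀ D : Matrix ι ι R, (S • D) r c = D r c + D r' c + D r c' + D r' c' := by
  let A := transvection r r' 1 * transvection c' c (-1 : R)
  let B := transvection c' c 1 * transvection r r' (-1 : R)
  have hBA : B * A = 1 := by
    rw [Matrix.mul_assoc, ← Matrix.mul_assoc (transvection r r' (-1)),
      transvection_mul_transvection_same _ _ hr, neg_add_cancel, transvection_zero, Matrix.one_mul,
      transvection_mul_transvection_same _ _ hc.symm, add_neg_cancel, transvection_zero]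
  refine ⟨ConjAct.toConjAct ⟨A, B, mul_eq_one_comm.1 hBA, hBA⟩, fun D => ?_⟩
  change (A * D * B) r c = _
  rw [Matrix.mul_assoc, Matrix.mul_assoc, transvection_mul_apply_same,
    transvection_mul_apply_of_ne _ _ _ _ hrc', transvection_mul_apply_of_ne _ _ _ _ hr'c',
    ← Matrix.mul_assoc, mul_transvection_apply_of_ne _ _ _ _ hr'c.symm,
    mul_transvection_apply_of_ne _ _ _ _ hr'c.symm, mul_transvection_apply_same,
    mul_transvection_apply_same]
  ring

theorem exists_rep_apply_eq_add_sq {ι : Type*} [Fintype ι] [DecidableEq ι]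
    (hι : 6 ≤ Fintype.card ι) {i j : ι} (hij : i ≠ j) :
    ∃ Φ : Matrix (Fin 2) (Fin 2) R × Matrix (Fin 2) (Fin 2) R →* Matrix ι ι R,
      (∀ p, Φ p i j = p.1 1 0 ^ 2 + p.2 1 0 ^ 2) ∧ ∀ p, Φ p = 1 → p.1 0 1 ^ 2 = 0 := by
  let κ := Fin (Fintype.card ι - 6)
  have hcard : Fintype.card ((Fin 3 ⊕ Fin 3) ⊕ κ) = Fintype.card ι := by
    simp only [κ, Fintype.card_sum, Fintype.card_fin]
    lia
  let e₀ := Fintype.equivOfCardEq hcard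
  obtain ⟨σ, hi, hj⟩ := MulAction.is_two_pretransitive_iff.1
    (Equiv.Perm.isMultiplyPretransitive ι 2)
    (e₀.injective.ne (a₁ := .inl (.inl 2)) (a₂ := .inl (.inl 0)) (by simp)) hij
  let e := e₀.trans σ
  obtain ⟨S, hS⟩ := exists_conj_apply_eq (R := R) (ι := (Fin 3 ⊕ Fin 3) ⊕ κ)
    (r := .inl (.inl 2)) (c := .inl (.inl 0)) (r' := .inl (.inr 2)) (c' := .inl (.inr 0))
    (by simp) (by simp) (by simp) (by simp) (by simp)
  let D : Matrix (Fin 2) (Fin 2) R × Matrix (Fin 2) (Fin 2) R →*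
      Matrix ((Fin 3 ⊕ Fin 3) ⊕ κ) ((Fin 3 ⊕ Fin 3) ⊕ κ) R :=
    (blockSum _ _).comp (((blockSum _ _).comp (symSquare.prodMap symSquare)).prod 1)
  let Φ := (reindexAlgEquiv R R e).toMulEquiv.toMonoidHom.comp
    ((MulDistribMulAction.toMonoidHom _ S).comp D)
  have hΦ (p) : Φ p = reindex e e (S • D p) := rfl
  refine ⟨Φ, fun p => ?_, fun p hp => ?_⟩
  · have hi : e.symm i = .inl (.inl 2) := e.symm_apply_eq.2 hi.symm
    have hj : e.symm j = .inl (.inl 0) := e.symm_apply_eq.2 hj.symm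
    rw [hΦ, reindex_apply, submatrix_apply, hi, hj, hS]
    simp [D, blockSum, symSquare_apply_two_zero]
  · have hSD : S • D p = S • 1 :=
      (reindexAlgEquiv R R e).injective (by rw [smul_one, map_one]; exact hp)
    have hD : D p = 1 := MulAction.injective S hSD
    simpa [D, blockSum, symSquare_apply_zero_two] using
      congrFun₂ hD (.inl (.inl 0)) (.inl (.inl 2))

end CornerRepresentation

section UpperRightCorner

open scoped MatrixGroups

theorem exists_rep_apply_eq_zero_iff {L ι : Type*} [Countable L] [Nontrivial L] [Fintype ι]
    [DecidableEq ι] (hι : 6 ≤ Fintype.card ι) {i j : ι} (hij : i ≠ j) (z : L) :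
    ∃ Φ : FreeGroup L × FreeGroup L →* Matrix ι ι ℤ, Φ (.of z, 1) ≠ 1 ∧
      ∀ u v, Φ (u, v) i j = 0 ↔ u ∈ Subgroup.zpowers (FreeGroup.of z) ∧ v = 1 := by
  obtain ⟨ρ₁, hz, hρ₁⟩ := exists_rep_apply_one_zero_eq_zero_iff_mem_zpowers z
  obtain ⟨ρ₂, hρ₂⟩ := exists_rep_apply_one_zero_eq_zero_iff_eq_one L
  obtain ⟨Φ, hΦ, hΦ1⟩ := exists_rep_apply_eq_add_sq (R := ℤ) hι hij
  let coe : SL(2, ℤ) →* Matrix (Fin 2) (Fin 2) ℤ :=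
    (Units.coeHom _).comp Matrix.SpecialLinearGroup.toGL
  refine ⟨Φ.comp ((coe.comp ρ₁).prodMap (coe.comp ρ₂)), fun h => hz ?_, fun u v => ?_⟩
  · exact pow_eq_zero_iff two_ne_zero |>.1 (hΦ1 _ h)
  · rw [← hρ₁, ← hρ₂]
    refine (congrArg (· = 0) (hΦ _)).to_iff.trans ?_
    rw [add_eq_zero_iff_of_nonneg (sq_nonneg _) (sq_nonneg _), sq_eq_zero_iff, sq_eq_zero_iff]
    rfl

theorem exists_not_computablePred_mem_closure :
    ∃ (L : Type) (_ : Finite L) (_ : Nontrivial L) (y p z : L)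
      (l : List (FreeGroup L × FreeGroup L)) (N : ℕ → ℕ), Primrec N ∧
      (¬ ComputablePred fun k =>
        (.of z, 1) ∈ Subgroup.closure {w | w ∈ (.of y ^ N k, .of p) :: l}) ∧
      ∀ k (i : ℤ), (.of z ^ i, 1) ∈ Subgroup.closure {w | w ∈ (.of y ^ N k, .of p) :: l} →
        i = 0 ∨ (.of z, 1) ∈ Subgroup.closure {w | w ∈ (.of y ^ N k, .of p) :: l} := by
  obtain ⟨L, _, _, y, p, z, R, N, hR, hN, hundec, hzpow⟩ := exists_not_computablePred_pairsCon
  let D := Set.range fun s : L => (FreeGroup.of s, FreeGroup.of s)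
  let l := ((Set.finite_range _).union hR : (D ∪ R).Finite).toFinset.toList
  have hl (k) : {w | w ∈ (.of y ^ N k, .of p) :: l} = D ∪ insert (.of y ^ N k, .of p) R := by
    ext
    simp [l, D]
  refine ⟨L, ‹_›, ‹_›, y, p, z, l, N, hN, ?_, ?_⟩ <;>
    simpa only [hl, D, mem_closure_diagonal_union_iff]

theorem closure_setOf_val_mem_map {G M : Type*} [Group G] [Monoid M] (Ψ : G →* Mˣ) (l : List G) :
    Subgroup.closure {g : Mˣ | (g : M) ∈ l.map fun x => (Ψ x : M)} =
      (Subgroup.closure {x | x ∈ l}).map Ψ := by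
  rw [MonoidHom.map_closure]
  congr 1
  ext
  simp [Units.val_inj]

theorem exists_mem_map_apply_eq_zero_iff {L ι K : Type*} [Fintype ι] [DecidableEq ι] [CommRing K]
    {Ψ : FreeGroup L × FreeGroup L →* GL ι K} {i j : ι} {z : L} (hz : Ψ (.of z, 1) ≠ 1)
    (hΨ : ∀ u v, Ψ (u, v) i j = 0 ↔ u ∈ Subgroup.zpowers (FreeGroup.of z) ∧ v = 1)
    {H : Subgroup (FreeGroup L × FreeGroup L)}
    (hH : ∀ k : ℤ, (.of z ^ k, 1) ∈ H → k = 0 ∨ (.of z, 1) ∈ H) :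
    (∃ g ∈ H.map Ψ, g ≠ 1 ∧ g i j = 0) ↔ (.of z, 1) ∈ H := by
  constructor
  · rintro ⟨_, ⟨⟨u, v⟩, hu, rfl⟩, hne, hzero⟩
    obtain ⟨⟨k, rfl⟩, rfl⟩ := (hΨ u v).1 hzero
    refine (hH k hu).resolve_left ?_
    rintro rfl
    exact hne (map_one Ψ)
  · exact fun h => ⟨_, ⟨_, h, rfl⟩, hz, (hΨ _ _).2 ⟨Subgroup.mem_zpowers _, rfl⟩⟩

theorem upper_right_corner_problem_undecidable_general (n : ℕ) (hn : 6 ≤ n) (i j : Fin n)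
    (hij : i ≠ j) :
    ¬ ∃ f : List (Matrix (Fin n) (Fin n) ℚ) → Bool, Computable f ∧
      ∀ X : List (Matrix (Fin n) (Fin n) ℚ), (∀ M ∈ X, IsUnit M) →
        (f X = true ↔
          ∃ g ∈ Subgroup.closure
              {g : GL (Fin n) ℚ | (g : Matrix (Fin n) (Fin n) ℚ) ∈ X},
            g ≠ 1 ∧ (g : Matrix (Fin n) (Fin n) ℚ) i j = 0) := by
  rintro ⟨f, hf, h⟩
  obtain ⟨L, _, _, y, p, z, l, N, hN, hundec, hzpow⟩ := exists_not_computablePred_mem_closure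
  obtain ⟨Φ, hΦz, hΦ⟩ := exists_rep_apply_eq_zero_iff (by rwa [Fintype.card_fin]) hij z
  let Ψ : FreeGroup L × FreeGroup L →* GL (Fin n) ℚ :=
    ((Int.castRingHom ℚ).mapMatrix.toMonoidHom.comp Φ).toHomUnits
  have hΨz : Ψ (.of z, 1) ≠ 1 := fun hz => hΦz <| Matrix.map_injective Int.cast_injective <|
    (congrArg Units.val hz).trans (Matrix.map_one _ Int.cast_zero Int.cast_one).symm
  have hΨ (u v) : Ψ (u, v) i j = 0 ↔ u ∈ Subgroup.zpowers (FreeGroup.of z) ∧ v = 1 :=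
    Int.cast_eq_zero.trans (hΦ u v)
  let X (k : ℕ) := ((.of y ^ N k, .of p) :: l).map fun w => (Ψ w : Matrix (Fin n) (Fin n) ℚ)
  have hX : Primrec X := by
    refine Primrec.list_cons.comp ?_ (.const (l.map fun w => (Ψ w).1))
    refine ((primrec_pow_mul_map_ratCast (Φ (.of y, 1)) (Φ (1, .of p))).comp hN).of_eq fun k => ?_
    rw [← map_pow, ← map_mul, Prod.pow_mk, Prod.mk_mul_mk, one_pow, one_mul, mul_one]
    rfl
  have hunit (k) : ∀ M ∈ X k, IsUnit M := by
    rintro _ hM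
    obtain ⟨w, -, rfl⟩ := List.mem_map.1 hM
    exact (Ψ w).isUnit
  have hfX (k) : f (X k) = true ↔
      (.of z, 1) ∈ Subgroup.closure {w | w ∈ (.of y ^ N k, .of p) :: l} := by
    rw [h _ (hunit k), closure_setOf_val_mem_map]
    exact exists_mem_map_apply_eq_zero_iff hΨz hΨ (hzpow k)
  exact hundec <| ComputablePred.computable_iff.2
    ⟨fun k => f (X k), hf.comp hX.to_comp, funext fun k => propext (hfX k).symm⟩

end UpperRightCorner

/-- **Undecidability of the upper-right-corner problem for matrix groups.**
For `n ≥ 9`, there is no computable function that, given a finite list `X` of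
invertible `n × n` rational matrices, decides whether the subgroup of
`GL_n(ℚ)` generated by `X` contains a non-identity matrix whose `(1,n)`-entry
is `0`. -/
theorem upper_right_corner_problem_undecidable (n : ℕ) (hn : 9 ≤ n) :
    ¬ ∃ f : List (Matrix (Fin n) (Fin n) ℚ) → Bool, Computable f ∧
      ∀ X : List (Matrix (Fin n) (Fin n) ℚ), (∀ M ∈ X, IsUnit M) →
        (f X = true ↔
          ∃ g ∈ Subgroup.closure
              {g : GL (Fin n) ℚ | (g : Matrix (Fin n) (Fin n) ℚ) ∈ X},
            g ≠ 1 ∧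
            (g : Matrix (Fin n) (Fin n) ℚ) ⟨0, by omega⟩ ⟨n - 1, by omega⟩ = 0) :=
  upper_right_corner_problem_undecidable_general n (by omega) ⟨0, by omega⟩ ⟨n - 1, by omega⟩
    (by simp only [ne_eq, Fin.mk.injEq]; omega)
end
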